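/- The sequence n ↦ β_{3·2ⁿ} (n ≥ 0) is strictly increasing and converges to β_c as n → ∞. -/

import Mathlib

open Filter Set

noncomputable section

namespace FatSierpinski

/-- The digit set Ω = {(0,0),(1,0),(0,1)} ⊆ ℝ². -/
def OmegaR : Set (ℝ × ℝ) := {(0, 0), (1, 0), (0, 1)}

/-- The fat Sierpinski gasket `S_β` (sequences are 0-indexed: `d i` is the digit d_{i+1}). -/
def Sfat (β : ℝ) : Set (ℝ × ℝ) :=
  {x | ∃ d : ℕ → ℝ × ℝ, (∀ i, d i ∈ OmegaR) ∧ x = ∑' i : ℕ, (β ^ (i + 1))⁻¹ • d i}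

/-- The convex hull `Δ_β` of `S_β`. -/
def Delta (β : ℝ) : Set (ℝ × ℝ) := convexHull ℝ (Sfat β)

/-- The map `f_d(x) = (x + d)/β`. -/
def fmap (β : ℝ) (d : ℝ × ℝ) (x : ℝ × ℝ) : ℝ × ℝ := β⁻¹ • (x + d)

/-- The overlap region `O_β = ⋃_{c ≠ d ∈ Ω} f_c(Δ_β) ∩ f_d(Δ_β)`. -/
def Ofat (β : ℝ) : Set (ℝ × ℝ) :=
  ⋃ c ∈ OmegaR, ⋃ d ∈ OmegaR, ⋃ (_ : c ≠ d), (fmap β c '' Delta β) ∩ (fmap β d '' Delta β)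

/-- The univoque set of codings `𝐔_β`. -/
def Ufat (β : ℝ) : Set (ℕ → ℝ × ℝ) :=
  {d | (∀ i, d i ∈ OmegaR) ∧
    ∀ n : ℕ, (∑' i : ℕ, (β ^ (i + 1))⁻¹ • d (n + i)) ∉ Ofat β}

/-- `d` has smallest period `k`. -/
def SmallestPeriod {α : Type*} (d : ℕ → α) (k : ℕ) : Prop :=
  0 < k ∧ (∀ i, d (i + k) = d i) ∧ ∀ j, 0 < j → j < k → ∃ i, d (i + j) ≠ d i

/-- The critical base `β_k`. -/
def betaK (k : ℕ) : ℝ :=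
  sInf {β : ℝ | β ∈ Set.Ioc (1 : ℝ) 2 ∧ ∃ d ∈ Ufat β, SmallestPeriod d k}

/-- Strict lexicographic order on sequences. -/
def seqLT {α : Type*} [Preorder α] (a b : ℕ → α) : Prop :=
  ∃ n, (∀ i < n, a i = b i) ∧ a n < b n

/-- Weak lexicographic order on sequences. -/
def seqLE {α : Type*} [Preorder α] (a b : ℕ → α) : Prop :=
  seqLT a b ∨ a = b

/-- `a` is a 0-1 sequence. -/
def IsBinary (a : ℕ → ℕ) : Prop := ∀ i, a i ≤ 1

/-- `a` does not end with `0^∞`. -/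
def NotEndInZeros (a : ℕ → ℕ) : Prop := ∀ N, ∃ i, N ≤ i ∧ a i ≠ 0

/-- `∑_{i=1}^∞ a_i β^{-i} = 1` (0-indexed: `a i` is a_{i+1}). -/
def SumsToOne (β : ℝ) (a : ℕ → ℕ) : Prop :=
  ∑' i : ℕ, (a i : ℝ) / β ^ (i + 1) = 1

/-- `a` is the quasi-greedy β-expansion of 1: the lexicographically largest
binary sequence not ending in `0^∞` whose value in base β is 1. -/
def IsQuasiGreedy (β : ℝ) (a : ℕ → ℕ) : Prop :=
  IsBinary a ∧ NotEndInZeros a ∧ SumsToOne β a ∧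
    ∀ b : ℕ → ℕ, IsBinary b → NotEndInZeros b → SumsToOne β b → seqLE b a

/-- `w⁺`: replace the final digit 0 of a block by 1. -/
def plusBlock (w : List ℕ) : List ℕ := w.dropLast ++ [1]

/-- `Θ` flips the outer digits of every consecutive triple
(000↦101, 001↦100, 100↦001, 101↦000). -/
def thetaBlock (w : List ℕ) : List ℕ :=
  w.mapIdx fun i x => if i % 3 = 1 then x else 1 - x

/-- `tB n` is the block `t_{n+1}`: `t_1 = 100`, `t_{n+1} = t_n⁺ Θ(t_n⁺)`. -/
def tB : ℕ → List ℕ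
  | 0 => [1, 0, 0]
  | n + 1 => plusBlock (tB n) ++ thetaBlock (plusBlock (tB n))

/-- The sequence `u w^∞` (the block `u` followed by `w` repeated forever). -/
def prefixPeriodic (u w : List ℕ) : ℕ → ℕ := fun i =>
  if i < u.length then u.getD i 0 else w.getD ((i - u.length) % w.length) 0

/-- The periodic sequence `w^∞`. -/
def periodicSeq (w : List ℕ) : ℕ → ℕ := fun i => w.getD (i % w.length) 0

/-- The componentwise limit `λ = 101001000101…` of the blocks `t_n`
(the digit `λ_{i+1}` has stabilized in `t_{i+2} = tB (i+1)`). -/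
def lamSeq : ℕ → ℕ := fun i => (tB (i + 1)).getD i 0

/-- `β_c` is the unique base in (1,2] with `∑ λ_i β^{-i} = 1`. -/
def IsBetaC (β : ℝ) : Prop := β ∈ Set.Ioc (1 : ℝ) 2 ∧ SumsToOne β lamSeq

/-- The sequence `t_{n+2}⁺ (Θ(t_{n+2}))^∞`, the quasi-greedy expansion of 1 for `β̂_n`. -/
def hatSeq (n : ℕ) : ℕ → ℕ :=
  prefixPeriodic (plusBlock (tB (n + 1))) (thetaBlock (tB (n + 1)))

/-- The Sharkovskii ordering `k ⊳ ℓ` on positive integers. -/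
def Sharkovskii (k l : ℕ) : Prop :=
  ∃ a b c d : ℕ, k = 2 ^ a * (2 * b + 1) ∧ l = 2 ^ c * (2 * d + 1) ∧ k ≠ l ∧
    ((1 ≤ b ∧ d = 0) ∨ (1 ≤ b ∧ 1 ≤ d ∧ (a < c ∨ (a = c ∧ b < d))) ∨
      (b = 0 ∧ d = 0 ∧ c < a))

/-- The digit set Ω as pairs of naturals (for combinatorial statements). -/
def OmegaD : Set (ℕ × ℕ) := {(0, 0), (1, 0), (0, 1)}

/-- The periodic extension `(d_1 … d_k)^∞` of a block. -/
def cyc (d : List (ℕ × ℕ)) : ℕ → ℕ × ℕ := fun i => d.getD (i % d.length) (0, 0)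

/-- Strict lexicographic order on lists. -/
def listLT (u v : List ℕ) : Prop := List.Lex (· < ·) u v

/-- Weak lexicographic order on lists. -/
def listLE (u v : List ℕ) : Prop := listLT u v ∨ u = v

/-- The first components `d_1¹ … d_k¹` of a block over Ω. -/
def comp1 (d : List (ℕ × ℕ)) : List ℕ := d.map Prod.fst

/-- The second components `d_1² … d_k²` of a block over Ω. -/
def comp2 (d : List (ℕ × ℕ)) : List ℕ := d.map Prod.snd

/-- The digits `(1 - d_1⁺) … (1 - d_k⁺)` where `d⁺ = d¹ + d²`. -/
def comp3 (d : List (ℕ × ℕ)) : List ℕ := d.map fun x => 1 - x.1 - x.2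

/-- Cyclic shift of a list by `j`. -/
def rot {α : Type*} (j : ℕ) (l : List α) : List α := l.drop j ++ l.take j

/-- `d` is a representation of the binary block `a`. -/
def IsRepresentation (a : List ℕ) (d : List (ℕ × ℕ)) : Prop :=
  d.length = a.length ∧ (∀ x ∈ d, x ∈ OmegaD) ∧
  SmallestPeriod (cyc d) a.length ∧
  comp1 d = a ∧ listLE (comp3 d) (comp2 d) ∧ listLE (comp2 d) a ∧
  ∀ j < a.length,
    listLE (comp1 (rot j d)) a ∧ listLE (comp2 (rot j d)) a ∧ listLE (comp3 (rot j d)) a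

/-- A binary block is admissible if it has a representation. -/
def IsAdmissible (a : List ℕ) : Prop := ∃ d, IsRepresentation a d

/-- The `i`-th consecutive triple of a block (0-indexed). -/
def tripleAt (a : List ℕ) (i : ℕ) : List ℕ :=
  [a.getD (3 * i) 0, a.getD (3 * i + 1) 0, a.getD (3 * i + 2) 0]

/-- The edges of the directed graph on {000, 001, 100, 101} defining the subshift `X`. -/
def XEdge (u v : List ℕ) : Prop :=
  (u, v) ∈ ({([1,0,1], [0,0,1]), ([1,0,1], [0,0,0]), ([0,0,1], [0,0,0]),
             ([0,0,0], [1,0,1]), ([0,0,0], [1,0,0]), ([1,0,0], [1,0,1])} :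
      Set (List ℕ × List ℕ))



/-! ### Combinatorics of the sequences -/

/-- Strict lexicographic order on Boolean sequences. -/
def bLT (x y : ℕ → Bool) : Prop :=
  ∃ n, (∀ i < n, x i = y i) ∧ x n = false ∧ y n = true

/-- Weak lexicographic order on Boolean sequences. -/
def bLE (x y : ℕ → Bool) : Prop := x = y ∨ bLT x y

theorem bLT_irrefl (x : ℕ → Bool) : ¬ bLT x x := by
  rintro ⟨n, -, h1, h2⟩; simp [h1] at h2

theorem bLT_trans {x y z : ℕ → Bool} (h1 : bLT x y) (h2 : bLT y z) : bLT x z := by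
  obtain ⟨n, hn, a, b⟩ := h1
  obtain ⟨m, hm, c, d⟩ := h2
  rcases lt_trichotomy n m with h | h | h
  · exact ⟨n, fun i hi => (hn i hi).trans (hm i (hi.trans h)), a, (hm n h) ▸ b⟩
  · subst h; simp [b] at c
  · exact ⟨m, fun i hi => (hn i (hi.trans h)).trans (hm i hi), (hn m h).trans c, d⟩

theorem bLE_trans_lt {x y z : ℕ → Bool} (h1 : bLE x y) (h2 : bLT y z) : bLT x z := by
  rcases h1 with rfl | h1
  · exact h2
  · exact bLT_trans h1 h2

theorem bLT_total (x y : ℕ → Bool) : bLT x y ∨ bLE y x := by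
  classical
  by_cases h : y = x
  · exact Or.inr (Or.inl h)
  have h' : ∃ n, y n ≠ x n := by
    by_contra! hc; exact h (funext hc)
  have h1 := Nat.find_spec h'
  have h2 : ∀ i < Nat.find h', y i = x i := fun i hi => by
    have := Nat.find_min h' hi; simpa using this
  cases hx : x (Nat.find h')
  · left; refine ⟨_, fun i hi => (h2 i hi).symm, hx, ?_⟩
    rw [hx] at h1; simpa using h1
  · right; right; refine ⟨_, h2, ?_, hx⟩
    rw [hx] at h1; simpa using h1

/-- The renormalised periodic sequences `0^∞, (10)^∞, (1100)^∞, (11010010)^∞, …`. -/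
def TT : ℕ → ℕ → Bool
  | 0, _ => false
  | _ + 1, 0 => true
  | n + 1, i + 1 => if i % 2 = 0 then TT n (i / 2) else !TT n (i / 2)

theorem TT_zero (i : ℕ) : TT 0 i = false := by simp [TT]
theorem TT_succ_zero (n : ℕ) : TT (n + 1) 0 = true := by simp [TT]
theorem TT_odd (n q : ℕ) : TT (n + 1) (2 * q + 1) = TT n q := by
  simp [TT]
theorem TT_even (n q : ℕ) : TT (n + 1) (2 * q + 2) = !TT n q := by
  have h1 : (2 * q + 1) % 2 = 1 := by omega
  have h2 : (2 * q + 1) / 2 = q := by omega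
  simp [TT, h1, h2]

theorem nat_cases2 (i : ℕ) : i = 0 ∨ (∃ q, i = 2 * q + 1) ∨ ∃ q, i = 2 * q + 2 := by
  rcases Nat.even_or_odd' i with ⟨k, h | h⟩
  · rcases k with _ | k
    · left; omega
    · right; right; exact ⟨k, by omega⟩
  · right; left; exact ⟨k, h⟩

theorem TT_P1 (n : ℕ) : TT (n + 1) (2 ^ n - 1) = true := by
  induction n with
  | zero => simp [TT]
  | succ n ih =>
    have h : 0 < 2 ^ n := by positivity
    have : 2 ^ (n + 1) - 1 = 2 * (2 ^ n - 1) + 1 := by rw [pow_succ]; omega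
    rw [this, TT_odd, ih]

theorem TT_P2 (n i : ℕ) : TT (n + 1) (i + 2 ^ n) = !TT (n + 1) i := by
  induction n generalizing i with
  | zero =>
    rcases nat_cases2 i with rfl | ⟨q, rfl⟩ | ⟨q, rfl⟩
    · have := TT_odd 0 0
      simp [TT_zero, TT_succ_zero] at this ⊢; exact this
    · have := TT_even 0 q
      simp only [pow_zero, TT_odd]; exact this
    · have := TT_odd 0 (q + 1)
      have h : 2 * q + 2 + 2 ^ 0 = 2 * (q + 1) + 1 := by ring
      rw [h, this, TT_even]; simp [TT_zero]
  | succ n ih =>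
    have h : 0 < 2 ^ n := by positivity
    rcases nat_cases2 i with rfl | ⟨q, rfl⟩ | ⟨q, rfl⟩
    · have : 0 + 2 ^ (n + 1) = 2 * (2 ^ n - 1) + 2 := by rw [pow_succ]; omega
      rw [this, TT_even, TT_P1, TT_succ_zero]
    · have : 2 * q + 1 + 2 ^ (n + 1) = 2 * (q + 2 ^ n) + 1 := by ring
      rw [this, TT_odd, TT_odd, ih]
    · have : 2 * q + 2 + 2 ^ (n + 1) = 2 * (q + 2 ^ n) + 2 := by ring
      rw [this, TT_even, TT_even, ih]

theorem TT_P3 (n i : ℕ) (hi : i + 1 < 2 ^ n) : TT (n + 1) i = TT n i := by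
  induction n generalizing i with
  | zero => simp at hi
  | succ n ih =>
    rw [pow_succ] at hi
    rcases nat_cases2 i with rfl | ⟨q, rfl⟩ | ⟨q, rfl⟩
    · rw [TT_succ_zero, TT_succ_zero]
    · rw [TT_odd, TT_odd, ih]; omega
    · rw [TT_even, TT_even, ih]; omega

theorem TT_lt_succ (n : ℕ) : bLT (TT n) (TT (n + 1)) := by
  induction n with
  | zero => exact ⟨0, by simp, by simp [TT], by simp [TT]⟩
  | succ n ih =>
    obtain ⟨k, hk, h1, h2⟩ := ih
    refine ⟨2 * k + 1, ?_, by rw [TT_odd, h1], by rw [TT_odd, h2]⟩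
    intro i hi
    rcases nat_cases2 i with rfl | ⟨q, rfl⟩ | ⟨q, rfl⟩
    · rw [TT_succ_zero, TT_succ_zero]
    · rw [TT_odd, TT_odd, hk]; omega
    · rw [TT_even, TT_even, hk]; omega

/-- All shifts of `TT m`, and their reflections, are at most `TT m`. -/
theorem TT_shift (m q : ℕ) :
    bLE (fun i => TT (m + 1) (q + i)) (TT (m + 1)) ∧
    bLE (fun i => !TT (m + 1) (q + i)) (TT (m + 1)) := by
  induction m generalizing q with
  | zero =>
    have h2 : ∀ q, TT 1 q = decide (q % 2 = 0) := by
      intro q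
      rcases nat_cases2 q with rfl | ⟨q, rfl⟩ | ⟨q, rfl⟩
      · simp [TT]
      · rw [TT_odd, TT_zero]; symm; simp
      · rw [TT_even, TT_zero]; symm; simp
    rcases Nat.mod_two_eq_zero_or_one q with h | h
    · refine ⟨Or.inl ?_, Or.inr ⟨0, by simp, ?_, ?_⟩⟩
      · funext i; simp only [zero_add, h2, decide_eq_decide]; omega
      · simp [h2, h]
      · simp [h2]
    · refine ⟨Or.inr ⟨0, by simp, ?_, ?_⟩, Or.inl ?_⟩
      · simp [h2, h]
      · simp [h2]
      · funext i; simp only [zero_add, h2]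
        rcases Nat.mod_two_eq_zero_or_one i with h' | h'
        · have : ¬ (q + i) % 2 = 0 := by omega
          simp [this, h']
        · have : (q + i) % 2 = 0 := by omega
          simp [this, h']
  | succ m ih =>
    have key : ∀ x : ℕ → Bool, bLE x (TT (m + 1)) → ∀ y : ℕ → Bool, y 0 = true →
        (∀ k, y (2 * k + 1) = x k) → (∀ k, y (2 * k + 2) = !x k) →
        bLE y (TT (m + 1 + 1)) := by
      rintro x (rfl | ⟨k, hk, h1, h2⟩) y y0 yo ye
      · left; funext i
        rcases nat_cases2 i with rfl | ⟨q, rfl⟩ | ⟨q, rfl⟩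
        · rw [TT_succ_zero, y0]
        · rw [TT_odd, yo]
        · rw [TT_even, ye]
      · right
        refine ⟨2 * k + 1, ?_, by rw [yo, h1], by rw [TT_odd, h2]⟩
        intro i hi
        rcases nat_cases2 i with rfl | ⟨q, rfl⟩ | ⟨q, rfl⟩
        · rw [TT_succ_zero, y0]
        · rw [TT_odd, yo, hk]; omega
        · rw [TT_even, ye, hk]; omega
    have z0 : ∀ y : ℕ → Bool, y 0 = false → bLE y (TT (m + 1 + 1)) := fun y hy =>
      Or.inr ⟨0, by simp, hy, TT_succ_zero _⟩
    have z1 : ∀ y : ℕ → Bool, (y 1 = !y 0) → bLE y (TT (m + 1 + 1)) := by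
      intro y hy
      cases h : y 0
      · exact z0 y h
      · refine Or.inr ⟨1, ?_, by simp [hy, h], ?_⟩
        · intro i hi; obtain rfl : i = 0 := by omega
          rw [h, TT_succ_zero]
        · exact (TT_odd (m + 1) 0).trans (TT_succ_zero m)
    rcases nat_cases2 q with rfl | ⟨q, rfl⟩ | ⟨q, rfl⟩
    · refine ⟨Or.inl (by funext i; simp), z0 _ (by simp [TT_succ_zero])⟩
    · constructor
      · apply z1
        have := TT_odd (m + 1) q
        have := TT_even (m + 1) q
        simp_all
      · apply z1
        have := TT_odd (m + 1) q
        have := TT_even (m + 1) q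
        simp_all
    · constructor
      · cases h : TT (m + 1) q
        · refine key _ (ih (q + 1)).1 _ (by simp [TT_even, h]) ?_ ?_
          · intro k
            have : 2 * q + 2 + (2 * k + 1) = 2 * (q + 1 + k) + 1 := by ring
            simp only [this, TT_odd]
          · intro k
            have : 2 * q + 2 + (2 * k + 2) = 2 * (q + 1 + k) + 2 := by ring
            simp only [this, TT_even]
        · exact z0 _ (by simp [TT_even, h])
      · cases h : TT (m + 1) q
        · exact z0 _ (by simp [TT_even, h])
        · refine key _ (ih (q + 1)).2 _ (by simp [TT_even, h]) ?_ ?_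
          · intro k
            have : 2 * q + 2 + (2 * k + 1) = 2 * (q + 1 + k) + 1 := by ring
            simp only [this, TT_odd]
          · intro k
            have : 2 * q + 2 + (2 * k + 2) = 2 * (q + 1 + k) + 2 := by ring
            simp only [this, TT_even]

/-- Insert a zero in the middle of every pair. -/
def ZI (x : ℕ → Bool) : ℕ → Bool := fun i =>
  if i % 3 = 1 then false else x (2 * (i / 3) + (i % 3) / 2)

theorem ZI_0 (x : ℕ → Bool) (q : ℕ) : ZI x (3 * q) = x (2 * q) := by
  have h1 : (3 * q) % 3 = 0 := by omega
  have h2 : (3 * q) / 3 = q := by omega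
  simp [ZI, h2]
theorem ZI_1 (x : ℕ → Bool) (q : ℕ) : ZI x (3 * q + 1) = false := by
  have h1 : (3 * q + 1) % 3 = 1 := by omega
  simp [ZI, h1]
theorem ZI_2 (x : ℕ → Bool) (q : ℕ) : ZI x (3 * q + 2) = x (2 * q + 1) := by
  have h1 : (3 * q + 2) % 3 = 2 := by omega
  have h2 : (3 * q + 2) / 3 = q := by omega
  simp [ZI, h1, h2]

theorem nat_cases3 (i : ℕ) : (∃ q, i = 3 * q) ∨ (∃ q, i = 3 * q + 1) ∨ ∃ q, i = 3 * q + 2 := by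
  have : i % 3 = 0 ∨ i % 3 = 1 ∨ i % 3 = 2 := by omega
  rcases this with h | h | h
  · left; exact ⟨i / 3, by omega⟩
  · right; left; exact ⟨i / 3, by omega⟩
  · right; right; exact ⟨i / 3, by omega⟩

theorem ZI_lt {x y : ℕ → Bool} (h : bLT x y) : bLT (ZI x) (ZI y) := by
  obtain ⟨k, hk, h1, h2⟩ := h
  have aux : ∀ K, (∀ i < K, i % 3 ≠ 1 → 2 * (i / 3) + (i % 3) / 2 < k) →
      ∀ i < K, ZI x i = ZI y i := by
    intro K hK i hi
    unfold ZI
    split_ifs with h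
    · rfl
    · exact hk _ (hK i hi h)
  rcases Nat.even_or_odd' k with ⟨c, rfl | rfl⟩
  · refine ⟨3 * c, aux _ ?_, by rw [ZI_0, h1], by rw [ZI_0, h2]⟩
    intro i hi h; omega
  · refine ⟨3 * c + 2, aux _ ?_, by rw [ZI_2, h1], by rw [ZI_2, h2]⟩
    intro i hi h; omega

theorem ZI_le {x y : ℕ → Bool} (h : bLE x y) : bLE (ZI x) (ZI y) := by
  rcases h with rfl | h
  · exact Or.inl rfl
  · exact Or.inr (ZI_lt h)

theorem ZI_shift (x : ℕ → Bool) (q : ℕ) :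
    (fun i => ZI x (3 * q + i)) = ZI (fun i => x (2 * q + i)) := by
  funext i
  rcases nat_cases3 i with ⟨p, rfl⟩ | ⟨p, rfl⟩ | ⟨p, rfl⟩
  · rw [ZI_0, show 3 * q + 3 * p = 3 * (q + p) by ring, ZI_0]; congr 1; ring
  · rw [ZI_1, show 3 * q + (3 * p + 1) = 3 * (q + p) + 1 by ring, ZI_1]
  · rw [ZI_2, show 3 * q + (3 * p + 2) = 3 * (q + p) + 2 by ring, ZI_2]; congr 1; ring

/-- The periodic sequence `t_{n+1}^∞`. -/
def AA (n : ℕ) : ℕ → Bool := ZI (TT (n + 1))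

theorem AA_zero (n : ℕ) : AA n 0 = true := by
  have := ZI_0 (TT (n + 1)) 0
  simpa [AA, TT_succ_zero] using this
theorem AA_1 (n q : ℕ) : AA n (3 * q + 1) = false := ZI_1 _ _
theorem AA_2 (n q : ℕ) : AA n (3 * q + 2) = TT n q := by
  unfold AA; rw [ZI_2, TT_odd]
theorem AA_3 (n q : ℕ) : AA n (3 * q + 3) = !TT n q := by
  unfold AA; rw [show 3 * q + 3 = 3 * (q + 1) by ring, ZI_0,
    show 2 * (q + 1) = 2 * q + 2 by ring, TT_even]

theorem AA_lt_succ (n : ℕ) : bLT (AA n) (AA (n + 1)) := ZI_lt (TT_lt_succ _)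

/-- The letter sequence with period `3 * 2 ^ n`. -/
def ww (n : ℕ) : ℕ → Fin 3 := fun i =>
  if i % 3 = 1 then 1 else if TT (n + 1) (2 * (i / 3) + (i % 3) / 2) then 0 else 2

/-- The indicator sequence of the letter `j` in `w` from position `m` on. -/
def ind (w : ℕ → Fin 3) (j : Fin 3) (m : ℕ) : ℕ → Bool := fun i => decide (w (m + i) = j)

theorem ind_tail (w : ℕ → Fin 3) (j : Fin 3) (m p : ℕ) :
    (fun i => ind w j m (p + i)) = ind w j (m + p) := by
  funext i; simp [ind, add_assoc]

theorem per3_le (n c : ℕ) (y : ℕ → Bool) (hy : ∀ i, y i = decide ((i + c) % 3 = 0)) :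
    bLE y (AA n) := by
  by_cases hc : c % 3 = 0
  · rcases n with _ | n
    · left; funext i
      rw [hy]
      rcases nat_cases3 i with ⟨q, rfl⟩ | ⟨q, rfl⟩ | ⟨q, rfl⟩
      · rcases q with _ | q
        · simp [AA_zero, hc]
        · rw [show 3 * (q + 1) = 3 * q + 3 by ring, AA_3, TT_zero]
          simp; omega
      · rw [AA_1]; simp; omega
      · rw [AA_2, TT_zero]; simp; omega
    · right
      refine ⟨2, ?_, ?_, ?_⟩
      · intro i hi
        have : i = 0 ∨ i = 1 := by omega
        rcases this with rfl | rfl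
        · simp [AA_zero, hy, hc]
        · have := AA_1 (n + 1) 0
          simp only [mul_zero, zero_add] at this
          rw [this, hy]; simp; omega
      · rw [hy]; simp; omega
      · have := AA_2 (n + 1) 0
        simpa [AA, TT_succ_zero] using this
  · right; exact ⟨0, by simp, by simp [hy, hc], AA_zero n⟩

theorem bLE_AA_zero (n : ℕ) (y : ℕ → Bool) (h : y 0 = false) : bLE y (AA n) :=
  Or.inr ⟨0, by simp, h, AA_zero n⟩

theorem ww_ind0 (n m : ℕ) : ind (ww n) 0 m = fun i => AA n (m + i) := by
  funext i
  simp only [ind, ww, AA, ZI]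
  split_ifs with h1 h2 <;> simp [*]

theorem ww_ind2 (n m : ℕ) : ind (ww n) 2 m = fun i => ZI (fun i => !TT (n + 1) i) (m + i) := by
  funext i
  simp only [ind, ww, ZI]
  split_ifs with h1 h2 <;> simp [*]

theorem ww_ind1 (n m i : ℕ) : ind (ww n) 1 m i = decide ((i + (m + 2)) % 3 = 0) := by
  simp only [ind, ww]
  split_ifs with h1 h2
  · symm; simp; omega
  · symm; simp; omega
  · symm; simp; omega

theorem ww_zero (i : ℕ) : ww 0 i = if i % 3 = 0 then 0 else if i % 3 = 1 then 1 else 2 := by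
  unfold ww
  rcases nat_cases3 i with ⟨q, rfl⟩ | ⟨q, rfl⟩ | ⟨q, rfl⟩
  · have h2 : 3 * q / 3 = q := by omega
    have h1 : (3 * q) % 3 = 0 := by omega
    rcases q with _ | q
    · simp [TT]
    · have := TT_even 0 q
      simp only [h1, h2]
      rw [show 2 * (q + 1) + 0 / 2 = 2 * q + 2 by omega]
      simp [this, TT_zero]
  · have h1 : (3 * q + 1) % 3 = 1 := by omega
    simp [h1]
  · have h1 : (3 * q + 2) % 3 = 2 := by omega
    have h2 : (3 * q + 2) / 3 = q := by omega
    have := TT_odd 0 q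
    simp [h1, h2, this, TT_zero]

theorem ZI_pair_le (n q : ℕ) (x : ℕ → Bool) (hx : x (2 * q + 2) = !x (2 * q + 1)) :
    bLE (fun i => ZI x (3 * q + 2 + i)) (AA (n + 1)) := by
  cases h : x (2 * q + 1)
  · apply bLE_AA_zero; simp [ZI_2, h]
  · right
    refine ⟨2, ?_, ?_, ?_⟩
    · intro i hi
      have : i = 0 ∨ i = 1 := by omega
      rcases this with rfl | rfl
      · simp [AA_zero, ZI_2, h]
      · have := AA_1 (n + 1) 0
        simp only [mul_zero, zero_add] at this
        simp only [this]
        rw [show 3 * q + 2 + 1 = 3 * (q + 1) by ring, ZI_0, show 2 * (q + 1) = 2 * q + 2 by ring,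
          hx, h]; rfl
    · change ZI x (3 * q + 2 + 2) = false
      rw [show 3 * q + 2 + 2 = 3 * (q + 1) + 1 by ring, ZI_1]
    · have := AA_2 (n + 1) 0
      simpa [AA, TT_succ_zero] using this

theorem ww_tail_le (n : ℕ) (j : Fin 3) (m : ℕ) : bLE (ind (ww n) j m) (AA n) := by
  rcases n with _ | n
  · have h : ∀ i, ww 0 i = if i % 3 = 0 then 0 else if i % 3 = 1 then 1 else 2 := ww_zero
    fin_cases j
    · apply per3_le 0 m; intro i
      simp only [ind, h]; split_ifs <;> (symm; simp; omega)
    · exact per3_le 0 (m + 2) _ (ww_ind1 0 m)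
    · apply per3_le 0 (m + 1); intro i
      simp only [ind, h]; split_ifs <;> (symm; simp; omega)
  · fin_cases j
    · change bLE (ind (ww (n + 1)) 0 m) _
      rw [ww_ind0]
      rcases nat_cases3 m with ⟨q, rfl⟩ | ⟨q, rfl⟩ | ⟨q, rfl⟩
      · unfold AA; rw [ZI_shift]
        exact ZI_le (TT_shift _ _).1
      · apply bLE_AA_zero; exact AA_1 _ _
      · apply ZI_pair_le
        rw [TT_even, TT_odd]
    · exact per3_le _ (m + 2) _ (ww_ind1 _ m)
    · change bLE (ind (ww (n + 1)) 2 m) _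
      rw [ww_ind2]
      rcases nat_cases3 m with ⟨q, rfl⟩ | ⟨q, rfl⟩ | ⟨q, rfl⟩
      · rw [ZI_shift]
        exact ZI_le (TT_shift _ _).2
      · apply bLE_AA_zero; exact ZI_1 _ _
      · apply ZI_pair_le
        rw [TT_even, TT_odd]

theorem AA_tail_le (n m : ℕ) : bLE (fun i => AA n (m + i)) (AA n) := by
  rw [← ww_ind0]; exact ww_tail_le n 0 m

theorem ww_add (n i : ℕ) : ww n (i + 3 * 2 ^ n) = ww n i := by
  have h1 : (i + 3 * 2 ^ n) % 3 = i % 3 := by omega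
  have h2 : (i + 3 * 2 ^ n) / 3 = i / 3 + 2 ^ n := by omega
  unfold ww
  rw [h1, h2, show 2 * (i / 3 + 2 ^ n) + i % 3 / 2 = 2 * (i / 3) + i % 3 / 2 + 2 ^ n + 2 ^ n by ring,
    TT_P2, TT_P2, Bool.not_not]

theorem ww_eq_one (n i : ℕ) : ww n i = 1 ↔ i % 3 = 1 := by
  unfold ww; split_ifs with h1 h2 <;> simp [*]

theorem ww_smallest (n : ℕ) : SmallestPeriod (ww n) (3 * 2 ^ n) := by
  refine ⟨by positivity, ww_add n, ?_⟩
  intro j hj hj2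
  by_contra! hc
  let sh : (ℕ → Fin 3) → (ℕ → Fin 3) := fun x i => x (i + 1)
  have it : ∀ k x i, (sh^[k] x) i = x (i + k) := by
    intro k
    induction k with
    | zero => intro x i; rfl
    | succ k ih =>
      intro x i
      rw [Function.iterate_succ, Function.comp, ih]
      simp only [sh]; congr 1
  have pt : ∀ k, Function.IsPeriodicPt sh k (ww n) ↔ ∀ i, ww n (i + k) = ww n i := by
    intro k
    unfold Function.IsPeriodicPt Function.IsFixedPt
    rw [funext_iff]; simp only [it]
  have hg := ((pt j).2 hc).gcd ((pt _).2 (ww_add n))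
  set g := Nat.gcd j (3 * 2 ^ n) with hgdef
  have hgd : g ∣ 3 * 2 ^ n := Nat.gcd_dvd_right _ _
  have hgj : g ≤ j := Nat.le_of_dvd hj (Nat.gcd_dvd_left _ _)
  have hg' := (pt g).1 hg
  have h3 : g % 3 = 0 := by
    have := (ww_eq_one n 1).2 rfl
    rw [← hg', ww_eq_one] at this
    omega
  obtain ⟨r, hr⟩ := Nat.dvd_of_mod_eq_zero h3
  have hr2 : r ∣ 2 ^ n := by
    rw [hr] at hgd
    exact Nat.dvd_of_mul_dvd_mul_left (by norm_num) hgd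
  obtain ⟨e, he, rfl⟩ := (Nat.dvd_prime_pow Nat.prime_two).1 hr2
  have hen : e < n := by
    by_contra hcon
    have : e = n := by omega
    subst this; omega
  obtain ⟨N, rfl⟩ : ∃ N, n = N + 1 := ⟨n - 1, by omega⟩
  have hd : g ∣ 3 * 2 ^ N := by
    rw [hr]; exact Nat.mul_dvd_mul_left _ (Nat.pow_dvd_pow _ (by omega))
  obtain ⟨c, hc'⟩ := hd
  have hm := (hg.mul_const c)
  rw [← hc', pt] at hm
  have h0 := hm 0
  unfold ww at h0
  have a1 : (0 + 3 * 2 ^ N) % 3 = 0 := by omega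
  have a2 : (0 + 3 * 2 ^ N) / 3 = 2 ^ N := by omega
  rw [a1, a2] at h0
  have a3 : 2 * 2 ^ N + 0 / 2 = 0 + 2 ^ (N + 1) := by rw [pow_succ]; omega
  rw [a3, TT_P2] at h0
  simp [TT_succ_zero] at h0

/-! ### Values of sequences -/

/-- The value of a Boolean sequence in base `β`. -/
def bval (β : ℝ) (x : ℕ → Bool) : ℝ := ∑' i : ℕ, (if x i then (1 : ℝ) else 0) * (β ^ (i + 1))⁻¹

theorem bterm_nonneg {β : ℝ} (hβ : 1 < β) (x : ℕ → Bool) (i : ℕ) :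
    0 ≤ (if x i then (1 : ℝ) else 0) * (β ^ (i + 1))⁻¹ := by
  have : 0 < β := by linarith
  split_ifs <;> positivity

theorem bterm_le {β : ℝ} (hβ : 1 < β) (x : ℕ → Bool) (i : ℕ) :
    (if x i then (1 : ℝ) else 0) * (β ^ (i + 1))⁻¹ ≤ (β ^ (i + 1))⁻¹ := by
  have h : 0 < β := by linarith
  have : 0 < (β ^ (i + 1))⁻¹ := by positivity
  split_ifs <;> linarith

theorem geom_hasSum {β : ℝ} (hβ : 1 < β) :
    HasSum (fun i : ℕ => (β ^ (i + 1))⁻¹) (1 / (β - 1)) := by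
  have h0 : 0 < β := by linarith
  have h := (hasSum_geometric_of_lt_one (r := β⁻¹) (by positivity)
    (inv_lt_one_of_one_lt₀ hβ)).mul_left β⁻¹
  have e1 : (fun i : ℕ => (β ^ (i + 1))⁻¹) = fun i : ℕ => β⁻¹ * β⁻¹ ^ i := by
    funext i; rw [← inv_pow, pow_succ]; ring
  have e2 : 1 / (β - 1) = β⁻¹ * (1 - β⁻¹)⁻¹ := by
    rw [← mul_inv, one_div, mul_sub, mul_inv_cancel₀ h0.ne', mul_one]
  rw [e1, e2]
  exact h

theorem bsummable {β : ℝ} (hβ : 1 < β) (x : ℕ → Bool) :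
    Summable (fun i : ℕ => (if x i then (1 : ℝ) else 0) * (β ^ (i + 1))⁻¹) :=
  Summable.of_nonneg_of_le (bterm_nonneg hβ x) (bterm_le hβ x) (geom_hasSum hβ).summable

theorem bval_nonneg {β : ℝ} (hβ : 1 < β) (x : ℕ → Bool) : 0 ≤ bval β x :=
  tsum_nonneg (bterm_nonneg hβ x)

theorem bval_le {β : ℝ} (hβ : 1 < β) (x : ℕ → Bool) : bval β x ≤ 1 / (β - 1) := by
  rw [← (geom_hasSum hβ).tsum_eq]
  exact (bsummable hβ x).tsum_le_tsum (bterm_le hβ x) (geom_hasSum hβ).summable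

/-- Splitting off the first `p` digits. -/
theorem bval_split {β : ℝ} (hβ : 1 < β) (x : ℕ → Bool) (p : ℕ) :
    bval β x = ∑ i ∈ Finset.range p, (if x i then (1 : ℝ) else 0) * (β ^ (i + 1))⁻¹
      + (β ^ p)⁻¹ * bval β (fun i => x (p + i)) := by
  have h0 : β ≠ 0 := by linarith
  rw [bval, ← (bsummable hβ x).sum_add_tsum_nat_add p, bval, ← tsum_mul_left]
  congr 1
  apply tsum_congr
  intro i
  rw [add_comm i p]
  have : (β ^ (p + i + 1))⁻¹ = (β ^ p)⁻¹ * (β ^ (i + 1))⁻¹ := by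
    rw [← mul_inv, ← pow_add]; ring_nf
  rw [this]; ring

theorem bval_split_succ {β : ℝ} (hβ : 1 < β) (x : ℕ → Bool) (p : ℕ) :
    bval β x = ∑ i ∈ Finset.range p, (if x i then (1 : ℝ) else 0) * (β ^ (i + 1))⁻¹
      + (if x p then (1 : ℝ) else 0) * (β ^ (p + 1))⁻¹
      + (β ^ (p + 1))⁻¹ * bval β (fun i => x (p + 1 + i)) := by
  rw [bval_split hβ x (p + 1), Finset.sum_range_succ]

theorem bval_diff {β : ℝ} (hβ : 1 < β) (x y : ℕ → Bool) (p : ℕ) (h : ∀ i < p, x i = y i)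
    (hx : x p = false) (hy : y p = true) :
    bval β x - bval β y = (β ^ (p + 1))⁻¹ *
      (bval β (fun i => x (p + 1 + i)) - 1 - bval β (fun i => y (p + 1 + i))) := by
  rw [bval_split_succ hβ x p, bval_split_succ hβ y p, hx, hy]
  have : ∑ i ∈ Finset.range p, (if x i then (1 : ℝ) else 0) * (β ^ (i + 1))⁻¹ =
      ∑ i ∈ Finset.range p, (if y i then (1 : ℝ) else 0) * (β ^ (i + 1))⁻¹ :=
    Finset.sum_congr rfl fun i hi => by rw [h i (Finset.mem_range.1 hi)]
  rw [this]; simp; ring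

theorem parry {β : ℝ} (hβ : 1 < β) (a : ℕ → Bool) (ha : bval β a = 1) (y : ℕ → Bool)
    (h0 : bLE y a) (h1 : ∀ p, y p = false → bLE (fun i => y (p + 1 + i)) a) : bval β y ≤ 1 := by
  have hb : 0 < β := by linarith
  have hinv : β⁻¹ < 1 := inv_lt_one_of_one_lt₀ hβ
  have hinv0 : 0 < β⁻¹ := by positivity
  have hB : 0 ≤ 1 / (β - 1) := by apply div_nonneg <;> linarith
  have key : ∀ N : ℕ, ∀ y : ℕ → Bool, bLE y a →
      (∀ p, y p = false → bLE (fun i => y (p + 1 + i)) a) →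
      bval β y - 1 ≤ 1 / (β - 1) * β⁻¹ ^ N := by
    intro N
    induction N with
    | zero => intro y _ _; have := bval_le hβ y; simp at this ⊢; linarith
    | succ N ih =>
      intro y h0 h1
      have hnn : 0 ≤ 1 / (β - 1) * β⁻¹ ^ (N + 1) := by positivity
      rcases h0 with rfl | ⟨p, hp, hx, hy⟩
      · linarith
      · have hd := bval_diff hβ y a p hp hx hy
        have hi := ih (fun i => y (p + 1 + i)) (h1 p hx) (by
          intro q hq
          have := h1 (p + 1 + q) hq
          simpa [add_assoc] using this)
        have hn := bval_nonneg hβ (fun i => a (p + 1 + i))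
        rw [ha] at hd
        rw [hd]
        have e1 : 0 < (β ^ (p + 1))⁻¹ := by positivity
        have e2 : (β ^ (p + 1))⁻¹ ≤ β⁻¹ := by
          rw [← inv_pow]
          exact pow_le_of_le_one hinv0.le hinv.le (by omega)
        calc _ ≤ (β ^ (p + 1))⁻¹ * (1 / (β - 1) * β⁻¹ ^ N) := by
              apply mul_le_mul_of_nonneg_left _ e1.le; linarith
          _ ≤ β⁻¹ * (1 / (β - 1) * β⁻¹ ^ N) := by
              apply mul_le_mul_of_nonneg_right e2; positivity
          _ = _ := by rw [pow_succ]; ring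
  have lim : Tendsto (fun N : ℕ => 1 / (β - 1) * β⁻¹ ^ N) atTop (nhds 0) := by
    have := (tendsto_pow_atTop_nhds_zero_of_lt_one hinv0.le hinv).const_mul (1 / (β - 1))
    simpa using this
  have := ge_of_tendsto' lim (fun N => key N y h0 h1)
  linarith

/-- Strict antitonicity of the value in the base. -/
theorem bval_lt {b c : ℝ} (hb : 1 < b) (hbc : b < c) (x : ℕ → Bool) (k : ℕ) (hk : x k = true) :
    bval c x < bval b x := by
  have hle : ∀ i : ℕ, (c ^ (i + 1))⁻¹ < (b ^ (i + 1))⁻¹ := fun i =>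
    inv_strictAnti₀ (by positivity) (pow_lt_pow_left₀ hbc (by linarith) (by omega))
  refine Summable.tsum_lt_tsum (i := k) ?_ ?_ (bsummable (hb.trans hbc) x) (bsummable hb x)
  · intro i; simp only; split_ifs <;> nlinarith [hle i]
  · simp [hk]; simpa using hle k

theorem bval_mono {b c : ℝ} (hb : 1 < b) (hbc : b ≤ c) (x : ℕ → Bool) :
    bval c x ≤ bval b x := by
  rcases hbc.eq_or_lt with rfl | hbc
  · rfl
  by_cases h : ∃ k, x k = true
  · obtain ⟨k, hk⟩ := h; exact (bval_lt hb hbc x k hk).le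
  · push Not at h
    simp at h
    simp [bval, h]

theorem bval_pos {β : ℝ} (hβ : 1 < β) (x : ℕ → Bool) (k : ℕ) (hk : x k = true) :
    0 < bval β x :=
  (bval_nonneg (by linarith : 1 < β + 1) x).trans_lt (bval_lt hβ (by linarith) x k hk)

theorem exists_gamma (n : ℕ) : ∃ g : ℝ, 1 < g ∧ g ≤ 2 ∧ bval g (AA n) = 1 := by
  have h1 : (1 : ℝ) ≤ bval (5 / 4) (AA n) := by
    have hb : (1 : ℝ) < 5 / 4 := by norm_num
    have := bval_split hb (AA n) 4
    have hn := bval_nonneg hb (fun i => AA n (4 + i))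
    have a0 := AA_zero n
    have a1 := AA_2 n 0
    have a2 := AA_3 n 0
    simp only [Finset.sum_range_succ, Finset.sum_range_zero] at this
    simp only [mul_zero, zero_add] at a1 a2
    rw [a0, a1, a2] at this
    have e : (0 : ℝ) ≤ (if AA n 1 = true then 1 else 0) * ((5 / 4 : ℝ) ^ (1 + 1))⁻¹ := by
      split_ifs <;> positivity
    have e2 : (0 : ℝ) ≤ ((5 / 4 : ℝ) ^ 4)⁻¹ * bval (5 / 4) (fun i => AA n (4 + i)) := by positivity
    cases h : TT n 0 <;> rw [h] at this <;> norm_num at this e e2 ⊢ <;> linarith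
  have h2 : bval 2 (AA n) ≤ 1 := by
    have := bval_le (by norm_num : (1 : ℝ) < 2) (AA n)
    norm_num at this; exact this
  have hc : ContinuousOn (fun b => bval b (AA n)) (Icc (5 / 4) 2) := by
    unfold bval
    apply continuousOn_tsum (u := fun i : ℕ => ((5 / 4 : ℝ) ^ (i + 1))⁻¹)
    · intro i
      apply ContinuousOn.mul continuousOn_const
      apply ContinuousOn.inv₀ (by fun_prop)
      intro x hx
      have : (0 : ℝ) < x := by linarith [hx.1]
      positivity
    · exact (geom_hasSum (by norm_num)).summable
    · intro i x hx
      have hx1 : 1 < x := by linarith [hx.1]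
      rw [Real.norm_of_nonneg (bterm_nonneg hx1 _ i)]
      refine (bterm_le hx1 _ i).trans ?_
      apply inv_anti₀ (by positivity)
      exact pow_le_pow_left₀ (by norm_num) hx.1 _
  obtain ⟨g, hg, hg2⟩ := intermediate_value_Icc' (by norm_num : (5 / 4 : ℝ) ≤ 2) hc ⟨h2, h1⟩
  exact ⟨g, by linarith [hg.1], hg.2, hg2⟩

/-- The base in which `t_{n+1}^∞` has value `1`. -/
def gam (n : ℕ) : ℝ := (exists_gamma n).choose
theorem gam_gt (n : ℕ) : 1 < gam n := (exists_gamma n).choose_spec.1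
theorem gam_le (n : ℕ) : gam n ≤ 2 := (exists_gamma n).choose_spec.2.1
theorem gam_val (n : ℕ) : bval (gam n) (AA n) = 1 := (exists_gamma n).choose_spec.2.2

theorem AA_exists_one (n m : ℕ) : ∃ k, AA n (m + k) = true := by
  have a1 := AA_2 n m
  have a2 := AA_3 n m
  cases h : TT n m
  · refine ⟨2 * m + 3, ?_⟩
    rw [show m + (2 * m + 3) = 3 * m + 3 by ring, a2, h]; rfl
  · refine ⟨2 * m + 2, ?_⟩
    rw [show m + (2 * m + 2) = 3 * m + 2 by ring, a1, h]

theorem gam_lt_succ (n : ℕ) : gam n < gam (n + 1) := by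
  have hg := gam_gt (n + 1)
  have hle : ∀ p, bLE (fun i => AA n (p + i)) (AA (n + 1)) := fun p =>
    Or.inr (bLE_trans_lt (AA_tail_le n p) (AA_lt_succ n))
  have hval : ∀ p, bval (gam (n + 1)) (fun i => AA n (p + i)) ≤ 1 := by
    intro p
    refine parry hg _ (gam_val (n + 1)) _ (hle p) ?_
    intro q _
    have := hle (p + (q + 1))
    simpa [add_assoc] using this
  obtain ⟨p, hp, hx, hy⟩ := AA_lt_succ n
  have hd := bval_diff hg _ _ p hp hx hy
  obtain ⟨k, hk⟩ := AA_exists_one (n + 1) (p + 1)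
  have hpos := bval_pos hg (fun i => AA (n + 1) (p + 1 + i)) k hk
  have e1 : 0 < (gam (n + 1) ^ (p + 1))⁻¹ := by positivity
  have hlt : bval (gam (n + 1)) (AA n) < 1 := by
    have h3 := hval (p + 1)
    rw [gam_val] at hd
    have : (gam (n + 1) ^ (p + 1))⁻¹ *
      (bval (gam (n + 1)) (fun i => AA n (p + 1 + i)) - 1 -
        bval (gam (n + 1)) (fun i => AA (n + 1) (p + 1 + i))) < 0 :=
      mul_neg_of_pos_of_neg e1 (by linarith)
    linarith
  by_contra! hcon
  have := bval_mono hg hcon (AA n)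
  rw [gam_val] at this
  linarith

/-! ### Description of the univoque set -/

/-- The three digits. -/
def dig : Fin 3 → ℝ × ℝ := ![(1, 0), (0, 1), (0, 0)]

theorem dig_mem (j : Fin 3) : dig j ∈ OmegaR := by
  fin_cases j <;> simp [dig, OmegaR]

theorem mem_OmegaR (x : ℝ × ℝ) : x ∈ OmegaR ↔ ∃ j, x = dig j := by
  constructor
  · rintro (h | h | h)
    · exact ⟨2, by simp [dig, h]⟩
    · exact ⟨0, by simp [dig, h]⟩
    · exact ⟨1, by simp [dig]; simpa using h⟩
  · rintro ⟨j, rfl⟩; exact dig_mem j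

theorem dig_inj : Function.Injective dig := by
  intro a b h
  fin_cases a <;> fin_cases b <;> simp [dig] at h ⊢

theorem point_hasSum {β : ℝ} (hβ : 1 < β) (w : ℕ → Fin 3) (n : ℕ) :
    HasSum (fun i : ℕ => (β ^ (i + 1))⁻¹ • dig (w (n + i)))
      (bval β (ind w 0 n), bval β (ind w 1 n)) := by
  have h := (bsummable hβ (ind w 0 n)).hasSum.prodMk (bsummable hβ (ind w 1 n)).hasSum
  have e : (fun i : ℕ => (β ^ (i + 1))⁻¹ • dig (w (n + i))) = fun i : ℕ =>
      ((if ind w 0 n i then (1 : ℝ) else 0) * (β ^ (i + 1))⁻¹,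
       (if ind w 1 n i then (1 : ℝ) else 0) * (β ^ (i + 1))⁻¹) := by
    funext i
    simp only [ind, decide_eq_true_eq]
    generalize w (n + i) = j
    fin_cases j <;> simp [dig]
  rw [e]; exact h

theorem bval_sum3 {β : ℝ} (hβ : 1 < β) (w : ℕ → Fin 3) (n : ℕ) :
    bval β (ind w 0 n) + bval β (ind w 1 n) + bval β (ind w 2 n) = 1 / (β - 1) := by
  rw [← (geom_hasSum hβ).tsum_eq]
  unfold bval
  rw [← (bsummable hβ _).tsum_add (bsummable hβ _),
    ← ((bsummable hβ _).add (bsummable hβ _)).tsum_add (bsummable hβ _)]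
  apply tsum_congr
  intro i
  simp only [ind, decide_eq_true_eq]
  generalize w (n + i) = j
  fin_cases j <;> simp

theorem exists_letters (d : ℕ → ℝ × ℝ) (hd : ∀ i, d i ∈ OmegaR) :
    ∃ w : ℕ → Fin 3, d = fun i => dig (w i) := by
  have : ∀ i, ∃ j, d i = dig j := fun i => (mem_OmegaR _).1 (hd i)
  choose w hw using this
  exact ⟨w, funext hw⟩

theorem bval_const_true {β : ℝ} (hβ : 1 < β) : bval β (fun _ => true) = 1 / (β - 1) := by
  rw [← (geom_hasSum hβ).tsum_eq]; simp [bval]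

theorem bval_const_false {β : ℝ} : bval β (fun _ => false) = 0 := by
  simp [bval]

theorem ind_const (k j : Fin 3) (m : ℕ) : ind (fun _ => k) j m = fun _ => decide (k = j) := rfl

theorem Delta_eq {β : ℝ} (hβ : 1 < β) :
    Delta β = {p : ℝ × ℝ | 0 ≤ p.1 ∧ 0 ≤ p.2 ∧ p.1 + p.2 ≤ 1 / (β - 1)} := by
  have hpos : 0 < 1 / (β - 1) := by apply div_pos <;> linarith
  apply Subset.antisymm
  · apply convexHull_min
    · rintro x ⟨d, hd, rfl⟩
      obtain ⟨w, rfl⟩ := exists_letters d hd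
      have h := (point_hasSum hβ w 0).tsum_eq
      simp only [zero_add] at h
      rw [h]
      have h3 := bval_sum3 hβ w 0
      have := bval_nonneg hβ (ind w 2 0)
      exact ⟨bval_nonneg hβ _, bval_nonneg hβ _, by simp only; linarith⟩
    · intro x hx y hy a b ha hb hab
      obtain ⟨h1, h2, h3⟩ := hx
      obtain ⟨h4, h5, h6⟩ := hy
      refine ⟨?_, ?_, ?_⟩
      · simp; positivity
      · simp; positivity
      · have e1 := mul_le_mul_of_nonneg_left h3 ha
        have e2 := mul_le_mul_of_nonneg_left h6 hb
        have e3 : a * (1 / (β - 1)) + b * (1 / (β - 1)) = 1 / (β - 1) := by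
          rw [← add_mul, hab, one_mul]
        simp only [Prod.fst_add, Prod.snd_add, Prod.smul_fst, Prod.smul_snd, smul_eq_mul]
        linarith
  · rintro ⟨x, y⟩ ⟨hx, hy, hxy⟩
    simp only at hx hy hxy
    set r := 1 / (β - 1) with hr
    have hv : ∀ j : Fin 3, (bval β (ind (fun _ => j) 0 0), bval β (ind (fun _ => j) 1 0))
        ∈ Delta β := by
      intro j
      apply subset_convexHull
      refine ⟨fun _ => dig j, fun _ => dig_mem j, ?_⟩
      exact (point_hasSum hβ (fun _ => j) 0).tsum_eq.symm
    have v0 : ((r, 0) : ℝ × ℝ) ∈ Delta β := by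
      have := hv 0
      simpa [ind_const, bval_const_true hβ, bval_const_false, ← hr] using this
    have v1 : ((0, r) : ℝ × ℝ) ∈ Delta β := by
      have := hv 1
      simpa [ind_const, bval_const_true hβ, bval_const_false, ← hr] using this
    have v2 : ((0, 0) : ℝ × ℝ) ∈ Delta β := by
      have := hv 2
      simpa [ind_const, bval_const_true hβ, bval_const_false, ← hr] using this
    have hc : Convex ℝ (Delta β) := convex_convexHull ℝ _
    have hsum := hc.sum_mem (t := (Finset.univ : Finset (Fin 3)))
      (w := ![x / r, y / r, 1 - x / r - y / r]) (z := ![(r, 0), (0, r), (0, 0)]) (by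
        intro i _
        fin_cases i
        · simp; positivity
        · simp; positivity
        · simp
          have : (x + y) / r ≤ 1 := by rw [div_le_one hpos]; exact hxy
          rw [add_div] at this; linarith) (by simp [Fin.sum_univ_three]) (by
        intro i _
        fin_cases i
        · exact v0
        · exact v1
        · exact v2)
    simp [Fin.sum_univ_three] at hsum
    rwa [div_mul_cancel₀ _ hpos.ne', div_mul_cancel₀ _ hpos.ne'] at hsum

theorem mem_fmap {β : ℝ} (hβ : 1 < β) (c p : ℝ × ℝ) :
    p ∈ fmap β c '' Delta β ↔ β • p - c ∈ Delta β := by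
  have h0 : β ≠ 0 := by linarith
  constructor
  · rintro ⟨x, hx, rfl⟩
    simpa [fmap, smul_smul, mul_inv_cancel₀ h0] using hx
  · intro h
    refine ⟨_, h, ?_⟩
    simp [fmap, smul_smul, inv_mul_cancel₀ h0]

theorem bval_ind_step {β : ℝ} (hβ : 1 < β) (w : ℕ → Fin 3) (j : Fin 3) (n : ℕ) :
    β * bval β (ind w j n) = (if w n = j then 1 else 0) + bval β (ind w j (n + 1)) := by
  have h0 : β ≠ 0 := by linarith
  rw [bval_split_succ hβ (ind w j n) 0, ind_tail]
  simp only [Finset.sum_range_zero, ind]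
  simp
  split_ifs
  · field_simp
  · field_simp; ring

theorem Ufat_iff {β : ℝ} (hβ : 1 < β) (w : ℕ → Fin 3) :
    (fun i => dig (w i)) ∈ Ufat β ↔ ∀ n j, w n ≠ j → bval β (ind w j (n + 1)) < 1 := by
  have key : ∀ n j, (bval β (ind w 0 n), bval β (ind w 1 n)) ∈ fmap β (dig j) '' Delta β ↔
      (w n = j ∨ 1 ≤ bval β (ind w j (n + 1))) := by
    intro n j
    rw [mem_fmap hβ, Delta_eq hβ]
    have s0 := bval_ind_step hβ w 0 n
    have s1 := bval_ind_step hβ w 1 n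
    have n0 := bval_nonneg hβ (ind w 0 (n + 1))
    have n1 := bval_nonneg hβ (ind w 1 (n + 1))
    have n2 := bval_nonneg hβ (ind w 2 (n + 1))
    have hs := bval_sum3 hβ w (n + 1)
    simp only [Prod.smul_mk, smul_eq_mul, s0, s1, mem_ofPred_eq, Prod.fst_sub, Prod.snd_sub]
    rw [← hs]
    generalize w n = k at *
    constructor
    · rintro ⟨h1, h2, h3⟩
      by_cases hk : k = j
      · exact Or.inl hk
      · right
        fin_cases k <;> fin_cases j <;> simp [dig] at h1 h2 h3 hk ⊢ <;> linarith
    · intro h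
      fin_cases k <;> fin_cases j <;> simp [dig] at h ⊢ <;> refine ⟨?_, ?_, ?_⟩ <;> linarith
  constructor
  · rintro ⟨-, h⟩ n j hj
    have h := h n
    rw [(point_hasSum hβ w n).tsum_eq] at h
    by_contra! hc
    apply h
    simp only [Ofat, mem_iUnion]
    exact ⟨dig (w n), dig_mem _, dig j, dig_mem _, fun e => hj (dig_inj e),
      (key n _).2 (Or.inl rfl), (key n _).2 (Or.inr hc)⟩
  · intro h
    refine ⟨fun i => dig_mem _, fun n hn => ?_⟩
    simp only [(point_hasSum hβ w n).tsum_eq] at hn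
    simp only [Ofat, mem_iUnion] at hn
    obtain ⟨c, hc, d, hd, hcd, h1, h2⟩ := hn
    obtain ⟨j, rfl⟩ := (mem_OmegaR c).1 hc
    obtain ⟨k, rfl⟩ := (mem_OmegaR d).1 hd
    rw [key] at h1 h2
    by_cases e1 : w n = j
    · by_cases e2 : w n = k
      · exact hcd (by rw [← e1, ← e2])
      · have := h n k e2
        rcases h2 with h2 | h2
        · exact e2 h2
        · linarith
    · have := h n j e1
      rcases h1 with h1 | h1
      · exact e1 h1
      · linarith

/-- Upper bound. -/
theorem ww_mem {β : ℝ} (n : ℕ) (h : gam n < β) : (fun i => dig (ww n i)) ∈ Ufat β := by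
  have hg := gam_gt n
  rw [Ufat_iff (hg.trans h)]
  intro m j hm
  have h1 : bval (gam n) (ind (ww n) j (m + 1)) ≤ 1 := by
    apply parry hg _ (gam_val n) _ (ww_tail_le _ _ _)
    intro p _
    rw [ind_tail]; exact ww_tail_le _ _ _
  by_cases hk : ∃ k, ind (ww n) j (m + 1) k = true
  · obtain ⟨k, hk⟩ := hk
    exact (bval_lt hg h _ k hk).trans_le h1
  · push Not at hk
    simp at hk
    simp [bval, hk]

theorem gam_lt_two (n : ℕ) : gam n < 2 := (gam_lt_succ n).trans_le (gam_le _)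

theorem dig_smallest {w : ℕ → Fin 3} {k : ℕ} :
    SmallestPeriod (fun i => dig (w i)) k ↔ SmallestPeriod w k := by
  simp only [SmallestPeriod, ne_eq, dig_inj.eq_iff]

theorem betaK_mem (n : ℕ) {β : ℝ} (h : gam n < β) (h2 : β ≤ 2) :
    β ∈ {β : ℝ | β ∈ Set.Ioc (1 : ℝ) 2 ∧ ∃ d ∈ Ufat β, SmallestPeriod d (3 * 2 ^ n)} :=
  ⟨⟨(gam_gt n).trans h, h2⟩, _, ww_mem n h, dig_smallest.2 (ww_smallest n)⟩

theorem betaK_le (n : ℕ) : betaK (3 * 2 ^ n) ≤ gam n := by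
  apply le_of_forall_gt_imp_ge_of_dense
  intro b hb
  have hm := betaK_mem n (β := min b 2) (lt_min hb (gam_lt_two n)) (min_le_right _ _)
  exact (csInf_le ⟨1, fun x hx => hx.1.1.le⟩ hm).trans (min_le_left _ _)

/-- Lexicographic form of the univoque condition. -/
theorem lex_of_val (n : ℕ) (w : ℕ → Fin 3)
    (h : ∀ m j, w m ≠ j → bval (gam n) (ind w j (m + 1)) < 1) (m : ℕ) (j : Fin 3)
    (hm : w m ≠ j) : bLT (ind w j (m + 1)) (AA n) := by
  have hg := gam_gt n
  have h1 := h m j hm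
  rcases bLT_total (ind w j (m + 1)) (AA n) with h2 | h2 | ⟨p, hp, hx, hy⟩
  · exact h2
  · rw [← h2, gam_val] at h1; exact absurd h1 (lt_irrefl _)
  · exfalso
    have hd := bval_diff hg _ _ p hp hx hy
    have hle : bval (gam n) (fun i => AA n (p + 1 + i)) ≤ 1 := by
      apply parry hg _ (gam_val n) _ (AA_tail_le _ _)
      intro q _
      have := AA_tail_le n (p + 1 + (q + 1))
      simpa [add_assoc] using this
    have hn := bval_nonneg hg (fun i => ind w j (m + 1) (p + 1 + i))
    have e1 : 0 < (gam n ^ (p + 1))⁻¹ := by positivity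
    rw [gam_val] at hd
    have : (gam n ^ (p + 1))⁻¹ * (bval (gam n) (fun i => AA n (p + 1 + i)) - 1 -
      bval (gam n) (fun i => ind w j (m + 1) (p + 1 + i))) ≤ 0 :=
      mul_nonpos_of_nonneg_of_nonpos e1.le (by linarith)
    linarith

/-! ### Rigidity below the critical bases -/

/-- The two-sided lexicographic condition for binary sequences. -/
def CC (n : ℕ) (v : ℕ → Bool) : Prop := ∀ q,
  (v q = false → bLT (fun i => v (q + 1 + i)) (TT n)) ∧
  (v q = true → bLT (fun i => !v (q + 1 + i)) (TT n))

theorem CC_shift {n : ℕ} {v : ℕ → Bool} (h : CC n v) (m : ℕ) : CC n (fun i => v (m + i)) := by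
  intro q
  have := h (m + q)
  simpa [add_assoc] using this

theorem TT_one (q : ℕ) : TT 1 q = decide (q % 2 = 0) := by
  rcases nat_cases2 q with rfl | ⟨q, rfl⟩ | ⟨q, rfl⟩
  · simp [TT]
  · rw [TT_odd, TT_zero]; symm; simp
  · rw [TT_even, TT_zero]; symm; simp

/-- Unpacking a strict inequality on a normalised tail. -/
theorem CC_norm {n : ℕ} {v : ℕ → Bool} (h : CC n v) (q : ℕ) :
    bLT (fun i => v (q + 1 + i) ^^ v q) (TT n) := by
  cases hq : v q
  · simpa using (h q).1 hq
  · simpa using (h q).2 hq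

theorem CC_one {v : ℕ → Bool} (h : CC 1 v) : ∀ i, v (i + 1) = v i := by
  by_contra! hc
  obtain ⟨i, hi⟩ := hc
  have alt : ∀ k, v (i + k + 1) = !v (i + k) := by
    intro k
    induction k with
    | zero =>
      revert hi
      simp only [add_zero]
      cases v i <;> cases v (i + 1) <;> simp
    | succ k ih =>
      obtain ⟨p, hp, hx, hy⟩ := CC_norm h (i + k)
      by_contra hcon
      have hcon : v (i + k + 1 + 1) = v (i + k + 1) := by
        simpa [add_assoc] using hcon
      have t0 := TT_one 0
      have t1 := TT_one 1
      simp at t0 t1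
      rcases p with _ | _ | p
      · simp [ih] at hx
      · rw [zero_add, t1] at hy; simp at hy
      · have := hp 1 (by omega)
        simp [t1, hcon, ih] at this
  have alt2 : ∀ k, v (i + k) = (v i ^^ decide (k % 2 = 1)) := by
    intro k
    induction k with
    | zero => simp
    | succ k ih =>
      rw [← add_assoc, alt, ih]
      rcases Nat.mod_two_eq_zero_or_one k with h | h
      · have : (k + 1) % 2 = 1 := by omega
        simp [h, this]
      · have : (k + 1) % 2 = 0 := by omega
        simp [h, this]
  have := CC_norm h i
  apply bLT_irrefl (TT 1)
  convert this using 1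
  funext k
  rw [TT_one, add_assoc, alt2]
  rcases Nat.mod_two_eq_zero_or_one k with h | h
  · have : (1 + k) % 2 = 1 := by omega
    simp [h, this]
  · have : (1 + k) % 2 = 0 := by omega
    simp [h, this]

theorem TT_prefix (n : ℕ) : TT (n + 2) 0 = true ∧ TT (n + 2) 1 = true ∧ TT (n + 2) 2 = false ∧
    TT (n + 2) 3 = TT n 0 ∧ TT (n + 2) 4 = (!TT n 0) ∧ TT (n + 2) 5 = (!TT n 0) := by
  have a1 := TT_odd (n + 1) 0
  have a2 := TT_even (n + 1) 0
  have a3 := TT_odd (n + 1) 1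
  have a4 := TT_even (n + 1) 1
  have a5 := TT_odd (n + 1) 2
  have b0 := TT_succ_zero n
  have b1 := TT_odd n 0
  have b2 := TT_even n 0
  have b3 := TT_succ_zero (n + 1)
  simp only [mul_zero, zero_add, mul_one] at *
  refine ⟨b3, ?_, ?_, ?_, ?_, ?_⟩
  · rw [a1, b0]
  · rw [a2, b0]; rfl
  · exact a3.trans b1
  · exact a4.trans (by rw [b1])
  · exact a5.trans b2

theorem lt_TT_prefix (n : ℕ) (x : ℕ → Bool) (h : bLT x (TT (n + 2))) :
    ¬ (x 0 = true ∧ x 1 = true ∧ x 2 = true) ∧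
    ¬ (x 0 = true ∧ x 1 = true ∧ x 3 = true ∧ x 4 = true) ∧
    ¬ (x 0 = true ∧ x 1 = true ∧ x 3 = true ∧ x 5 = true) := by
  obtain ⟨t0, t1, t2, t3, t4, t5⟩ := TT_prefix n
  obtain ⟨p, hp, hx, hy⟩ := h
  have hp0 := hp 0
  have hp1 := hp 1
  have hp2 := hp 2
  have hp3 := hp 3
  have hp4 := hp 4
  have hp5 := hp 5
  clear hp
  generalize TT n 0 = e at *
  by_cases hp6 : 6 ≤ p
  · rw [hp0 (by omega), hp1 (by omega), hp2 (by omega), hp3 (by omega), hp4 (by omega),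
      hp5 (by omega), t0, t1, t2, t3, t4, t5]
    cases e <;> decide
  · interval_cases p <;> simp_all

/-- Renormalisation step. -/
theorem CC_renorm {n : ℕ} {v : ℕ → Bool} (h : CC (n + 2) v) (I : ℕ)
    (h1 : v (I + 1) ≠ v I) (h2 : v (I + 2) = v (I + 1)) :
    (∀ k, v (I + 1 + 2 * k + 1) = !v (I + 1 + 2 * (k + 1))) ∧
    CC (n + 1) (fun k => v (I + 1 + 2 * k)) := by
  -- a double preceded by a different digit
  have loc : ∀ J, v (J + 1) ≠ v J → v (J + 2) = v (J + 1) →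
      v (J + 3) ≠ v (J + 2) ∧ (v (J + 4) = v (J + 3) ∨
        (v (J + 5) ≠ v (J + 4) ∧ v (J + 6) = v (J + 5))) := by
    intro J e1 e2
    obtain ⟨f1, f2, f3⟩ := lt_TT_prefix n _ (CC_norm h J)
    simp only [add_zero, add_assoc, Nat.reduceAdd] at f1 f2 f3
    generalize v J = a0 at *
    generalize v (J + 1) = a1 at *
    generalize v (J + 2) = a2 at *
    generalize v (J + 3) = a3 at *
    generalize v (J + 4) = a4 at *
    generalize v (J + 5) = a5 at *
    generalize v (J + 6) = a6 at *
    revert a0 a1 a2 a3 a4 a5 a6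
    decide
  have str : ∀ k, v (I + 2 * k + 1) ≠ v (I + 2 * k) ∧
      (v (I + 2 * k + 2) = v (I + 2 * k + 1) ∨
        (v (I + 2 * k + 3) ≠ v (I + 2 * k + 2) ∧ v (I + 2 * k + 4) = v (I + 2 * k + 3))) := by
    intro k
    induction k with
    | zero => exact ⟨h1, Or.inl h2⟩
    | succ k ih =>
      obtain ⟨e1, e2 | ⟨e2, e3⟩⟩ := ih
      · exact loc _ e1 e2
      · exact ⟨e2, Or.inl e3⟩
  have s1 : ∀ k, v (I + 1 + 2 * k + 1) = !v (I + 1 + 2 * (k + 1)) := by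
    intro k
    have := (str (k + 1)).1
    rw [show I + 2 * (k + 1) = I + 1 + 2 * k + 1 by ring] at this
    rw [show I + 1 + 2 * (k + 1) = I + 1 + 2 * k + 1 + 1 by ring]
    revert this
    cases v (I + 1 + 2 * k + 1 + 1) <;> cases v (I + 1 + 2 * k + 1) <;> simp
  refine ⟨s1, ?_⟩
  -- transfer of the order
  have tr : ∀ x y : ℕ → Bool, bLT x (TT (n + 2)) → x 0 = true →
      (∀ k, x (2 * k + 1) = y k) → (∀ k, x (2 * k + 2) = !y k) → bLT y (TT (n + 1)) := by
    rintro x y ⟨p, hp, hx, hy⟩ x0 xo xe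
    have hk : ∀ k, 2 * k + 1 < p → y k = TT (n + 1) k := by
      intro k hk
      have := hp _ hk
      rwa [xo, TT_odd] at this
    rcases nat_cases2 p with rfl | ⟨q, rfl⟩ | ⟨q, rfl⟩
    · rw [x0] at hx; simp at hx
    · rw [xo] at hx; rw [TT_odd] at hy
      exact ⟨q, fun i hi => hk i (by omega), hx, hy⟩
    · have := hk q (by omega)
      rw [xe, this] at hx; rw [TT_even] at hy
      rw [hx] at hy; simp at hy
  intro q
  have hpre := (str q).1
  have hh := h (I + 2 * q)
  have ee : I + 1 + 2 * q = I + 2 * q + 1 := by ring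
  constructor
  · intro hq
    simp only [ee] at hq
    rw [hq] at hpre
    have hv : v (I + 2 * q) = true := by
      revert hpre; cases v (I + 2 * q) <;> simp
    refine tr _ _ (hh.2 hv) (by simp [hq]) ?_ ?_
    · intro k
      have := s1 (q + k)
      rw [show I + 2 * q + 1 + (2 * k + 1) = I + 1 + 2 * (q + k) + 1 by ring, this, Bool.not_not]
      congr 2; ring
    · intro k
      congr 2; ring
  · intro hq
    simp only [ee] at hq
    rw [hq] at hpre
    have hv : v (I + 2 * q) = false := by
      revert hpre; cases v (I + 2 * q) <;> simp
    refine tr _ _ (hh.1 hv) (by simp [hq]) ?_ ?_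
    · intro k
      have := s1 (q + k)
      rw [show I + 2 * q + 1 + (2 * k + 1) = I + 1 + 2 * (q + k) + 1 by ring, this]
      congr 2; ring
    · intro k
      simp only [Bool.not_not]
      congr 1; ring

theorem CC_period (n : ℕ) (v : ℕ → Bool) (h : CC (n + 1) v) :
    ∃ N, ∀ i, N ≤ i → v (i + 2 ^ n) = v i := by
  induction n generalizing v with
  | zero => exact ⟨0, fun i _ => CC_one h i⟩
  | succ n ih =>
    by_cases hconst : ∀ i, v (i + 1) = v i
    · refine ⟨0, fun i _ => ?_⟩
      have : ∀ k, v (i + k) = v i := by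
        intro k
        induction k with
        | zero => rfl
        | succ k ih => rw [← add_assoc, hconst, ih]
      exact this _
    push Not at hconst
    obtain ⟨i0, hi0⟩ := hconst
    by_cases halt : ∀ i, i0 ≤ i → v (i + 1) ≠ v i
    · refine ⟨i0, fun i hi => ?_⟩
      have h2 : ∀ i, i0 ≤ i → v (i + 2) = v i := by
        intro i hi
        have e1 := halt i hi
        have e2 := halt (i + 1) (by omega)
        revert e1 e2
        rw [show i + 1 + 1 = i + 2 by ring]
        cases v i <;> cases v (i + 1) <;> cases v (i + 2) <;> simp
      have : ∀ k, v (i + 2 * k) = v i := by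
        intro k
        induction k with
        | zero => rfl
        | succ k ih => rw [show i + 2 * (k + 1) = i + 2 * k + 2 by ring, h2 _ (by omega), ih]
      rw [pow_succ, mul_comm]; exact this _
    push Not at halt
    obtain ⟨I, hI1, hI2, hI3⟩ : ∃ I, i0 ≤ I ∧ v (I + 1) ≠ v I ∧ v (I + 2) = v (I + 1) := by
      by_contra! hcon
      obtain ⟨i, hi, he⟩ := halt
      have : ∀ k, v (i0 + k + 1) ≠ v (i0 + k) := by
        intro k
        induction k with
        | zero => exact hi0
        | succ k ih => exact hcon (i0 + k) (by omega) ih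
      have := this (i - i0)
      rw [show i0 + (i - i0) = i by omega] at this
      exact this he
    obtain ⟨s1, s2⟩ := CC_renorm h I hI2 hI3
    obtain ⟨N, hN⟩ := ih _ s2
    refine ⟨I + 1 + 2 * N, fun i hi => ?_⟩
    obtain ⟨j, rfl⟩ : ∃ j, i = I + 1 + j := ⟨i - (I + 1), by omega⟩
    rcases Nat.even_or_odd' j with ⟨c, rfl | rfl⟩
    · rw [show I + 1 + 2 * c + 2 ^ (n + 1) = I + 1 + 2 * (c + 2 ^ n) by ring]
      exact hN c (by omega)
    · have := hN (c + 1) (by omega)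
      rw [show I + 1 + (2 * c + 1) + 2 ^ (n + 1) = I + 1 + 2 * (c + 2 ^ n) + 1 by ring,
        show I + 1 + (2 * c + 1) = I + 1 + 2 * c + 1 by ring, s1, s1, ← this]
      congr 2; ring

theorem lt_AA_prefix (n : ℕ) (x : ℕ → Bool) (h : bLT x (AA (n + 1))) :
    ¬ (x 0 = true ∧ x 1 = true) ∧
    ¬ (x 0 = true ∧ x 2 = true ∧ x 3 = true) ∧
    ¬ (x 0 = true ∧ x 2 = true ∧ x 4 = true) ∧
    ¬ (x 0 = true ∧ x 2 = true ∧ x 5 = true ∧ x 6 = true) ∧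
    ¬ (x 0 = true ∧ x 2 = true ∧ x 5 = true ∧ x 7 = true) ∧
    ¬ (x 0 = true ∧ x 2 = true ∧ x 5 = true ∧ x 8 = true) := by
  have t0 := AA_zero (n + 1)
  have t1 := AA_1 (n + 1) 0
  have t2 := AA_2 (n + 1) 0
  have t3 := AA_3 (n + 1) 0
  have t4 := AA_1 (n + 1) 1
  have t5 := AA_2 (n + 1) 1
  have t6 := AA_3 (n + 1) 1
  have t7 := AA_1 (n + 1) 2
  have t8 := AA_2 (n + 1) 2
  have b0 := TT_succ_zero n
  have b1 := TT_odd n 0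
  have b2 := TT_even n 0
  simp only [mul_zero, zero_add, mul_one, Nat.reduceMul, Nat.reduceAdd] at *
  rw [b0] at t2 t3
  rw [b1] at t5 t6
  rw [b2] at t8
  obtain ⟨p, hp, hx, hy⟩ := h
  have hp0 := hp 0
  have hp1 := hp 1
  have hp2 := hp 2
  have hp3 := hp 3
  have hp4 := hp 4
  have hp5 := hp 5
  have hp6 := hp 6
  have hp7 := hp 7
  have hp8 := hp 8
  clear hp
  generalize TT n 0 = e at *
  by_cases hp9 : 9 ≤ p
  · rw [hp0 (by omega), hp1 (by omega), hp2 (by omega), hp3 (by omega), hp4 (by omega),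
      hp5 (by omega), hp6 (by omega), hp7 (by omega), hp8 (by omega),
      t0, t1, t2, t3, t4, t5, t6, t7, t8]
    cases e <;> decide
  · interval_cases p <;> simp_all

set_option synthInstance.maxSize 100000 in
set_option synthInstance.maxHeartbeats 0 in
set_option maxRecDepth 100000 in
set_option maxHeartbeats 4000000 in
theorem turn_local : ∀ a0 a1 : Fin 3, a0 ≠ a1 → ∀ a2, a1 ≠ a2 → ∀ a3, a2 ≠ a3 → a3 = a1 →
    ∀ a4, a3 ≠ a4 → ∀ a5, a4 ≠ a5 → ¬ (a3 = a1 ∧ a5 = a1) →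
    ∀ a6, a5 ≠ a6 → ¬ (a4 = a2 ∧ a6 = a2) →
    ∀ a7, a6 ≠ a7 → ¬ (a5 = a3 ∧ a7 = a3) →
    ∀ a8, a7 ≠ a8 → ¬ (a6 = a4 ∧ a8 = a4) → ¬ (a3 = a1 ∧ a6 = a1 ∧ a8 = a1) →
    ∀ a9, a8 ≠ a9 → ¬ (a7 = a5 ∧ a9 = a5) → ¬ (a4 = a2 ∧ a7 = a2 ∧ a9 = a2) →
      ¬ (a3 = a1 ∧ a6 = a1 ∧ a9 = a1) →
    a5 = a2 ∧ (a6 = a4 ∨ (a8 = a2 ∧ a9 = a7)) := by decide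

theorem third_letter : ∀ a b : Fin 3, a ≠ b → ∃ c, c ≠ a ∧ c ≠ b ∧ ∀ x, x ≠ b → x = a ∨ x = c := by
  decide

theorem fin3_cycle : ∀ a b c d : Fin 3, a ≠ b → b ≠ c → c ≠ d → c ≠ a → d ≠ b → d = a := by
  intro a b c d; omega

theorem AA_transfer (N : ℕ) (x y : ℕ → Bool) (h : bLT x (AA N)) (x0 : x 0 = true)
    (x1 : ∀ k, x (3 * k + 1) = false) (x2 : ∀ k, x (3 * k + 2) = y k)
    (x3 : ∀ k, x (3 * k + 3) = !y k) : bLT y (TT N) := by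
  obtain ⟨p, hp, hx, hy⟩ := h
  have hk : ∀ k, 3 * k + 2 < p → y k = TT N k := by
    intro k hk
    have := hp _ hk
    rwa [x2, AA_2] at this
  rcases nat_cases3 p with ⟨q, rfl⟩ | ⟨q, rfl⟩ | ⟨q, rfl⟩
  · rcases q with _ | q
    · rw [mul_zero, x0] at hx; simp at hx
    · rw [show 3 * (q + 1) = 3 * q + 3 by ring] at *
      have := hk q (by omega)
      rw [x3, this] at hx; rw [AA_3] at hy
      rw [hx] at hy; simp at hy
  · rw [AA_1] at hy; simp at hy
  · rw [x2] at hx; rw [AA_2] at hy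
    exact ⟨q, fun i hi => hk i (by omega), hx, hy⟩

theorem word_period (n : ℕ) (w : ℕ → Fin 3)
    (h : ∀ m j, w m ≠ j → bLT (ind w j (m + 1)) (AA (n + 1))) :
    ∃ N, ∀ i, N ≤ i → w (i + 3 * 2 ^ n) = w i := by
  by_cases hconst : ∀ i, w (i + 1) = w i
  · refine ⟨0, fun i _ => ?_⟩
    have : ∀ k, w (i + k) = w i := by
      intro k
      induction k with
      | zero => rfl
      | succ k ih => rw [← add_assoc, hconst, ih]
    exact this _
  push Not at hconst
  obtain ⟨i0, hi0⟩ := hconst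
  have F : ∀ m, w m ≠ w (m + 1) →
      w (m + 1) ≠ w (m + 2) ∧
      ¬ (w (m + 3) = w (m + 1) ∧ w (m + 5) = w (m + 1)) ∧
      ¬ (w (m + 3) = w (m + 1) ∧ w (m + 6) = w (m + 1) ∧ w (m + 8) = w (m + 1)) ∧
      ¬ (w (m + 3) = w (m + 1) ∧ w (m + 6) = w (m + 1) ∧ w (m + 9) = w (m + 1)) := by
    intro m hm
    obtain ⟨f1, -, f2, -, f3, f4⟩ := lt_AA_prefix n _ (h m _ hm)
    simp only [ind, add_zero, add_assoc, Nat.reduceAdd, decide_eq_true_eq, true_and] at f1 f2 f3 f4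
    exact ⟨fun e => f1 e.symm, f2, f3, f4⟩
  have dist : ∀ i, i0 ≤ i → w i ≠ w (i + 1) := by
    intro i hi
    induction i, hi using Nat.le_induction with
    | base => exact fun e => hi0 e.symm
    | succ i hi ih => exact (F i ih).1
  by_cases hturn : ∀ i, i0 ≤ i → w (i + 2) ≠ w i
  · refine ⟨i0, fun i hi => ?_⟩
    have h3 : ∀ i, i0 ≤ i → w (i + 3) = w i := fun i hi =>
      fin3_cycle (w i) (w (i + 1)) (w (i + 2)) (w (i + 3)) (dist i hi) (dist (i + 1) (by omega))
        (dist (i + 2) (by omega)) (hturn i hi) (hturn (i + 1) (by omega))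
    have : ∀ k, w (i + 3 * k) = w i := by
      intro k
      induction k with
      | zero => rfl
      | succ k ih => rw [show i + 3 * (k + 1) = i + 3 * k + 3 by ring, h3 _ (by omega), ih]
    exact this _
  have loc : ∀ J, i0 ≤ J → w (J + 3) = w (J + 1) →
      w (J + 5) = w (J + 2) ∧ (w (J + 6) = w (J + 4) ∨
        (w (J + 8) = w (J + 2) ∧ w (J + 9) = w (J + 7))) := by
    intro J hJ e
    have D := fun k => dist (J + k) (by omega)
    have G := fun k => (F (J + k) (D k)).2
    simp only [add_assoc] at D G
    exact turn_local (w J) (w (J + 1)) (D 0) (w (J + 2)) (D 1) (w (J + 3)) (D 2) e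
      (w (J + 4)) (D 3) (w (J + 5)) (D 4) (G 0).1 (w (J + 6)) (D 5) (G 1).1
      (w (J + 7)) (D 6) (G 2).1 (w (J + 8)) (D 7) (G 3).1 (G 0).2.1
      (w (J + 9)) (D 8) (G 4).1 (G 1).2.1 (G 0).2.2
  -- there is a turn after position `i0`; use periodic structure to find one with a predecessor
  by_cases hturn2 : ∀ i, i0 + 1 ≤ i → w (i + 2) ≠ w i
  · refine ⟨i0 + 1, fun i hi => ?_⟩
    have h3 : ∀ i, i0 + 1 ≤ i → w (i + 3) = w i := fun i hi =>
      fin3_cycle (w i) (w (i + 1)) (w (i + 2)) (w (i + 3)) (dist i (by omega))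
        (dist (i + 1) (by omega))
        (dist (i + 2) (by omega)) (hturn2 i hi) (hturn2 (i + 1) (by omega))
    have : ∀ k, w (i + 3 * k) = w i := by
      intro k
      induction k with
      | zero => rfl
      | succ k ih => rw [show i + 3 * (k + 1) = i + 3 * k + 3 by ring, h3 _ (by omega), ih]
    exact this _
  clear hturn
  push Not at hturn2
  obtain ⟨I', hI', ht⟩ := hturn2
  obtain ⟨I, rfl⟩ : ∃ I, I' = I + 1 := ⟨I' - 1, by omega⟩
  have hI : i0 ≤ I := by omega
  have str : ∀ k, w (I + 3 * k + 2) = w (I + 2) ∧ (w (I + 3 * k + 3) = w (I + 3 * k + 1) ∨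
      (w (I + 3 * k + 5) = w (I + 2) ∧ w (I + 3 * k + 6) = w (I + 3 * k + 4))) := by
    intro k
    induction k with
    | zero => exact ⟨rfl, Or.inl ht⟩
    | succ k ih =>
      obtain ⟨e1, e2 | ⟨e2, e3⟩⟩ := ih
      · obtain ⟨g1, g2⟩ := loc (I + 3 * k) (by omega) e2
        rw [e1] at g1 g2
        exact ⟨g1, g2⟩
      · exact ⟨e2, Or.inl e3⟩
  set b := w (I + 2) with hb
  set a := w (I + 1) with ha
  obtain ⟨c, hca, hcb, hthird⟩ := third_letter a b (dist (I + 1) (by omega))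
  have p1 : ∀ k, w (I + 1 + 3 * k + 1) = b := fun k => by
    rw [← (str k).1]; congr 1; ring
  have p0 : ∀ k, w (I + 1 + 3 * k) ≠ b := fun k => by
    rw [← p1 k]; exact dist _ (by omega)
  have p2 : ∀ k, w (I + 1 + 3 * k + 2) ≠ b := fun k => by
    rw [← p1 k]; exact (dist _ (by omega)).symm
  have p3 : ∀ k, w (I + 1 + 3 * k + 2) ≠ w (I + 1 + 3 * (k + 1)) := fun k =>
    dist (I + 1 + 3 * k + 2) (by omega)
  have q0 : ∀ k, w (I + 1 + 3 * k) ≠ a → w (I + 1 + 3 * k) = c := fun k hk =>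
    (hthird _ (p0 k)).resolve_left hk
  have q2a : ∀ k, w (I + 1 + 3 * (k + 1)) = a → w (I + 1 + 3 * k + 2) = c := fun k hk =>
    (hthird _ (p2 k)).resolve_left fun e => p3 k (e.trans hk.symm)
  have q2c : ∀ k, w (I + 1 + 3 * (k + 1)) = c → w (I + 1 + 3 * k + 2) = a := fun k hk =>
    (hthird _ (p2 k)).resolve_right fun e => p3 k (e.trans hk.symm)
  have hab : a ≠ b := dist (I + 1) (by omega)
  have hCC : CC (n + 1) (fun k => decide (w (I + 1 + 3 * k) = a)) := by
    intro q
    have hpre : w (I + 3 * q) ≠ w (I + 1 + 3 * q) := by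
      rw [show I + 1 + 3 * q = I + 3 * q + 1 by ring]; exact dist _ (by omega)
    constructor
    · intro hq
      simp only [decide_eq_false_iff_not] at hq
      have hq := q0 q hq
      rw [hq] at hpre
      refine AA_transfer _ _ _ (h _ _ hpre) ?_ ?_ ?_ ?_
      · simp only [ind, decide_eq_true_eq]; rw [← hq]; congr 1; ring
      · intro k
        simp only [ind, decide_eq_false_iff_not]
        rw [show I + 3 * q + 1 + (3 * k + 1) = I + 1 + 3 * (q + k) + 1 by ring, p1]
        exact hcb.symm
      · intro k
        simp only [ind]
        rw [show I + 3 * q + 1 + (3 * k + 2) = I + 1 + 3 * (q + k) + 2 by ring,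
          show q + 1 + k = q + k + 1 by ring]
        by_cases e : w (I + 1 + 3 * (q + k + 1)) = a
        · simp [e, q2a _ e]
        · simp [e, q2c _ (q0 _ e), hca.symm]
      · intro k
        simp only [ind]
        rw [show I + 3 * q + 1 + (3 * k + 3) = I + 1 + 3 * (q + k + 1) by ring,
          show q + 1 + k = q + k + 1 by ring]
        by_cases e : w (I + 1 + 3 * (q + k + 1)) = a
        · simp [e, hca.symm]
        · simp [q0 _ e, hca]
    · intro hq
      simp only [decide_eq_true_eq] at hq
      rw [hq] at hpre
      refine AA_transfer _ _ _ (h _ _ hpre) ?_ ?_ ?_ ?_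
      · simp only [ind, decide_eq_true_eq]; rw [← hq]; congr 1; ring
      · intro k
        simp only [ind, decide_eq_false_iff_not]
        rw [show I + 3 * q + 1 + (3 * k + 1) = I + 1 + 3 * (q + k) + 1 by ring, p1]
        exact hab.symm
      · intro k
        simp only [ind]
        rw [show I + 3 * q + 1 + (3 * k + 2) = I + 1 + 3 * (q + k) + 2 by ring,
          show q + 1 + k = q + k + 1 by ring]
        by_cases e : w (I + 1 + 3 * (q + k + 1)) = a
        · simp [e, q2a _ e, hca]
        · simp [e, q2c _ (q0 _ e)]
      · intro k
        simp only [ind]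
        rw [show I + 3 * q + 1 + (3 * k + 3) = I + 1 + 3 * (q + k + 1) by ring,
          show q + 1 + k = q + k + 1 by ring]
        simp
  obtain ⟨N, hN⟩ := CC_period n _ hCC
  have hN0 : ∀ k, N ≤ k → w (I + 1 + 3 * (k + 2 ^ n)) = w (I + 1 + 3 * k) := by
    intro k hk
    have := hN k hk
    simp only [decide_eq_decide] at this
    by_cases e : w (I + 1 + 3 * k) = a
    · rw [e, this.2 e]
    · rw [q0 _ e, q0 _ (fun e' => e (this.1 e'))]
  refine ⟨I + 1 + 3 * N, fun i hi => ?_⟩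
  obtain ⟨j, rfl⟩ : ∃ j, i = I + 1 + j := ⟨i - (I + 1), by omega⟩
  rcases nat_cases3 j with ⟨k, rfl⟩ | ⟨k, rfl⟩ | ⟨k, rfl⟩
  · rw [show I + 1 + 3 * k + 3 * 2 ^ n = I + 1 + 3 * (k + 2 ^ n) by ring]
    exact hN0 k (by omega)
  · rw [show I + 1 + (3 * k + 1) + 3 * 2 ^ n = I + 1 + 3 * (k + 2 ^ n) + 1 by ring,
      show I + 1 + (3 * k + 1) = I + 1 + 3 * k + 1 by ring, p1, p1]
  · rw [show I + 1 + (3 * k + 2) + 3 * 2 ^ n = I + 1 + 3 * (k + 2 ^ n) + 2 by ring,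
      show I + 1 + (3 * k + 2) = I + 1 + 3 * k + 2 by ring]
    have hk := hN0 (k + 1) (by omega)
    rw [show k + 1 + 2 ^ n = k + 2 ^ n + 1 by ring] at hk
    by_cases e : w (I + 1 + 3 * (k + 1)) = a
    · rw [q2a _ e, q2a _ (hk.trans e)]
    · rw [q2c _ (q0 _ e), q2c _ (hk.trans (q0 _ e))]

theorem le_betaK (n : ℕ) : gam (n + 1) ≤ betaK (3 * 2 ^ (n + 1)) := by
  apply le_csInf ⟨2, betaK_mem (n + 1) (gam_lt_two _) le_rfl⟩
  rintro β ⟨⟨hβ, -⟩, d, hd, hper⟩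
  by_contra! hlt
  obtain ⟨w, rfl⟩ := exists_letters d hd.1
  rw [Ufat_iff hβ] at hd
  rw [dig_smallest] at hper
  have hlex := lex_of_val (n + 1) w fun m j hm =>
    (bval_mono hβ hlt.le _).trans_lt (hd m j hm)
  obtain ⟨N, hN⟩ := word_period n w hlex
  obtain ⟨hk, hp, hmin⟩ := hper
  have hpos : 0 < 2 ^ n := by positivity
  obtain ⟨i, hi⟩ := hmin (3 * 2 ^ n) (by positivity) (by rw [pow_succ]; omega)
  apply hi
  have hmul : ∀ M i, w (i + M * (3 * 2 ^ (n + 1))) = w i := by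
    intro M
    induction M with
    | zero => intro i; simp
    | succ M ih => intro i; rw [add_mul, one_mul, ← add_assoc, hp, ih]
  calc w (i + 3 * 2 ^ n) = w (i + 3 * 2 ^ n + N * (3 * 2 ^ (n + 1))) := (hmul _ _).symm
    _ = w (i + N * (3 * 2 ^ (n + 1)) + 3 * 2 ^ n) := by congr 1; ring
    _ = w (i + N * (3 * 2 ^ (n + 1))) :=
      hN _ (le_trans (Nat.le_mul_of_pos_right N (by positivity)) (Nat.le_add_left _ _))
    _ = w i := hmul _ _

theorem betaK_eq (n : ℕ) : betaK (3 * 2 ^ (n + 1)) = gam (n + 1) :=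
  le_antisymm (betaK_le _) (le_betaK n)

/-! ### The blocks and the limit -/

theorem AA_stable (n i : ℕ) (hi : i + 1 < 3 * 2 ^ n) : AA (n + 1) i = AA n i := by
  unfold AA ZI
  split_ifs with h
  · rfl
  · apply TT_P3; rw [pow_succ]; omega

theorem AA_anti (n i : ℕ) : AA (n + 1) (i + 3 * 2 ^ n) =
    if i % 3 = 1 then false else !AA (n + 1) i := by
  have h1 : (i + 3 * 2 ^ n) % 3 = i % 3 := by omega
  have h2 : (i + 3 * 2 ^ n) / 3 = i / 3 + 2 ^ n := by omega
  unfold AA ZI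
  rw [h1, h2]
  split_ifs with h
  · rfl
  · rw [show 2 * (i / 3 + 2 ^ n) + i % 3 / 2 = 2 * (i / 3) + i % 3 / 2 + 2 ^ (n + 1) by ring, TT_P2]

theorem AA_last (n : ℕ) : AA (n + 1) (3 * 2 ^ n - 1) = true := by
  have h : 0 < 2 ^ n := by positivity
  rw [show 3 * 2 ^ n - 1 = 3 * (2 ^ n - 1) + 2 by omega, AA_2, TT_P1]

theorem tB_spec (n : ℕ) : (tB n).length = 3 * 2 ^ n ∧
    ∀ i < 3 * 2 ^ n, (tB n).getD i 0 = (AA n i).toNat := by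
  induction n with
  | zero =>
    refine ⟨rfl, ?_⟩
    have t0 := AA_zero 0
    have t1 := AA_1 0 0
    have t2 := AA_2 0 0
    simp [TT_zero] at t1 t2
    intro i hi
    simp at hi
    interval_cases i <;> simp [tB, t0, t1, t2]
  | succ n ih =>
    obtain ⟨hl, hv⟩ := ih
    have hpos : 0 < 2 ^ n := by positivity
    have hlp : (plusBlock (tB n)).length = 3 * 2 ^ n := by
      simp [plusBlock, hl]; omega
    have hlt : (thetaBlock (plusBlock (tB n))).length = 3 * 2 ^ n := by
      simp [thetaBlock, hlp]
    have hpv : ∀ i < 3 * 2 ^ n, (plusBlock (tB n)).getD i 0 = (AA (n + 1) i).toNat := by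
      intro i hi
      unfold plusBlock
      by_cases h : i + 1 < 3 * 2 ^ n
      · rw [List.getD_append _ _ _ _ (by simp [hl]; omega), AA_stable n i h, ← hv i hi]
        simp [List.getD, List.getElem?_dropLast, hl]
        rw [if_pos (by omega)]
      · have : i = 3 * 2 ^ n - 1 := by omega
        subst this
        rw [AA_last, List.getD_append_right _ _ _ _ (by simp [hl])]
        simp [hl]
    refine ⟨by simp [tB, hlp, hlt]; ring, ?_⟩
    intro i hi
    rw [tB]
    by_cases h : i < 3 * 2 ^ n
    · rw [List.getD_append _ _ _ _ (by rw [hlp]; exact h), hpv i h]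
    · obtain ⟨k, rfl⟩ : ∃ k, i = k + 3 * 2 ^ n := ⟨i - 3 * 2 ^ n, by omega⟩
      have hk : k < 3 * 2 ^ n := by rw [pow_succ] at hi; omega
      rw [List.getD_append_right _ _ _ _ (by rw [hlp]; omega), hlp, Nat.add_sub_cancel, AA_anti]
      have hkv := hpv k hk
      have hk1 : k < (plusBlock (tB n)).length := by rw [hlp]; exact hk
      have hg : (thetaBlock (plusBlock (tB n))).getD k 0 =
          if k % 3 = 1 then (plusBlock (tB n)).getD k 0 else 1 - (plusBlock (tB n)).getD k 0 := by
        simp [thetaBlock, List.getD, List.getElem?_mapIdx, List.getElem?_eq_getElem hk1]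
      rw [hg, hkv]
      split_ifs with h3
      · obtain ⟨q, rfl⟩ : ∃ q, k = 3 * q + 1 := ⟨k / 3, by omega⟩
        rw [AA_1]
      · cases AA (n + 1) k <;> rfl

theorem lam_eq (i n : ℕ) (h : i + 1 ≤ n) : lamSeq i = (AA n i).toNat := by
  have hlt : ∀ k, i + 1 ≤ k → i + 1 < 3 * 2 ^ k := fun k hk => by
    have := Nat.lt_two_pow_self (n := k)
    omega
  induction n, h using Nat.le_induction with
  | base => exact (tB_spec (i + 1)).2 i (by have := hlt (i + 1) le_rfl; omega)
  | succ n hn ih => rw [ih, AA_stable n i (hlt n hn)]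

/-- The limit sequence as a Boolean sequence. -/
def lamB : ℕ → Bool := fun i => AA (i + 1) i

theorem lamB_eq (i n : ℕ) (h : i + 1 ≤ n) : AA n i = lamB i := by
  have h1 := lam_eq i n h
  have h2 := lam_eq i (i + 1) le_rfl
  unfold lamB
  rw [h1] at h2
  revert h2
  cases AA n i <;> cases AA (i + 1) i <;> simp

theorem bval_lam (β : ℝ) : ∑' i : ℕ, (lamSeq i : ℝ) / β ^ (i + 1) = bval β lamB := by
  unfold bval
  apply tsum_congr
  intro i
  rw [lam_eq i (i + 1) le_rfl, div_eq_mul_inv]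
  unfold lamB
  cases AA (i + 1) i <;> simp

theorem bval_tendsto {β : ℝ} (hβ : 1 < β) :
    Tendsto (fun n => bval β (AA n)) atTop (nhds (bval β lamB)) := by
  unfold bval
  apply tendsto_tsum_of_dominated_convergence (geom_hasSum hβ).summable
  · intro i
    apply tendsto_const_nhds.congr'
    filter_upwards [eventually_ge_atTop (i + 1)] with n hn
    rw [lamB_eq i n hn]
  · filter_upwards with n i
    rw [Real.norm_of_nonneg (bterm_nonneg hβ _ i)]
    exact bterm_le hβ _ i

theorem gam_tendsto (bc : ℝ) (hbc : IsBetaC bc) : Tendsto gam atTop (nhds bc) := by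
  obtain ⟨⟨h1, h2⟩, hs⟩ := hbc
  have hs : bval bc lamB = 1 := by rw [← bval_lam]; exact hs
  have l0 : lamB 0 = true := AA_zero 1
  rw [tendsto_order]
  constructor
  · intro b hb
    by_cases hb1 : 1 < b
    · have hv := bval_lt hb1 hb lamB 0 l0
      rw [hs] at hv
      filter_upwards [(bval_tendsto hb1).eventually_const_lt hv] with n hn
      by_contra! hcon
      have := bval_mono (gam_gt n) hcon (AA n)
      rw [gam_val] at this
      linarith
    · exact Eventually.of_forall fun n => (not_lt.1 hb1).trans_lt (gam_gt n)
  · intro b hb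
    have hv := bval_lt h1 hb lamB 0 l0
    rw [hs] at hv
    filter_upwards [(bval_tendsto (h1.trans hb)).eventually_lt_const hv] with n hn
    by_contra! hcon
    have := bval_mono (h1.trans hb) hcon (AA n)
    rw [gam_val] at this
    linarith

/-- The sequence n ↦ β_{3·2ⁿ} is strictly increasing and converges to β_c. -/
theorem stmt10 (bc : ℝ) (hbc : FatSierpinski.IsBetaC bc) :
    StrictMono (fun n : ℕ => FatSierpinski.betaK (3 * 2 ^ n)) ∧
    Filter.Tendsto (fun n : ℕ => FatSierpinski.betaK (3 * 2 ^ n))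
      Filter.atTop (nhds bc) := by
  constructor
  · apply strictMono_nat_of_lt_succ
    intro n
    exact (betaK_le n).trans_lt ((gam_lt_succ n).trans_le (le_betaK n))
  · rw [← Filter.tendsto_add_atTop_iff_nat 1]
    have h := (Filter.tendsto_add_atTop_iff_nat 1).2 (gam_tendsto bc hbc)
    exact h.congr (fun n => (betaK_eq n).symm)

end FatSierpinski
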